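/- arXiv:1907.06681 — 4 statements merged into one kernel-verified Lean document; each statement's English description precedes it below -/
import Mathlib

section
/- For every real number t with t < 1 there exists ε > 0 such that for all real z with |z| < ε the series ∑_{n≥0} Pₙ(t) zⁿ/n! converges and equals √(1−t) / (√(1−t) − tanh(z·√(1−t))). -/
open scoped Classical in
/-- The number of peaks of a permutation of `Fin n` (0-indexed: a peak is an
index `i` with `1 ≤ i ≤ n-2` such that `π (i-1) < π i > π (i+1)`;
this matches the 1-indexed condition `2 ≤ i ≤ n-1` of the paper). -/
noncomputable def numPeaks {n : ℕ} (π : Equiv.Perm (Fin n)) : ℕ :=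
  (Finset.univ.filter fun i : Fin n =>
    ∃ (_ : 1 ≤ (i : ℕ)) (h2 : (i : ℕ) + 1 < n),
      π ⟨(i : ℕ) - 1, Nat.lt_of_le_of_lt (Nat.sub_le _ _) i.isLt⟩ < π i ∧
      π ⟨(i : ℕ) + 1, h2⟩ < π i).card

/-- The peak polynomial `Pₙ(t) = ∑_{π ∈ Sₙ} t^(pk π)`, evaluated at `t : ℝ`. -/
noncomputable def peakPoly (n : ℕ) (t : ℝ) : ℝ :=
  ∑ π : Equiv.Perm (Fin n), t ^ numPeaks π

/-- `fₙ = Pₙ(-1)`. -/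
noncomputable def f (n : ℕ) : ℝ := peakPoly n (-1)

open Finset in
/-- peak set of a sequence -/
def pkSet (n : ℕ) (g : ℕ → ℕ) : Finset ℕ :=
  (Finset.range n).filter fun i => 1 ≤ i ∧ i + 1 < n ∧ g (i - 1) < g i ∧ g (i + 1) < g i

def permSeq {n : ℕ} (π : Equiv.Perm (Fin n)) (i : ℕ) : ℕ := if h : i < n then (π ⟨i, h⟩ : ℕ) else 0

lemma numPeaks_eq {n : ℕ} (π : Equiv.Perm (Fin n)) :
    numPeaks π = (pkSet n (permSeq π)).card := by
  classical
  unfold numPeaks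
  rw [← Finset.card_map Fin.valEmbedding]
  congr 1
  ext i
  simp only [Finset.mem_map, Finset.mem_filter, Finset.mem_univ, true_and, Fin.valEmbedding_apply,
    pkSet, Finset.mem_range]
  constructor
  · rintro ⟨j, ⟨h1, h2, h3, h4⟩, rfl⟩
    have hj := j.isLt
    refine ⟨hj, h1, h2, ?_, ?_⟩
    · have : (j : ℕ) - 1 < n := by omega
      simpa [permSeq, this] using h3
    · simpa [permSeq, h2] using h4
  · rintro ⟨h0, h1, h2, h3, h4⟩
    refine ⟨⟨i, h0⟩, ⟨h1, h2, ?_, ?_⟩, rfl⟩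
    · have : i - 1 < n := by omega
      simpa [permSeq, this, h0] using h3
    · simpa [permSeq, h2, h0] using h4

def insPerm {n : ℕ} (p : Fin (n + 1)) (π : Equiv.Perm (Fin n)) : Equiv.Perm (Fin (n + 1)) :=
  (finSuccEquiv' p).trans ((Equiv.optionCongr π).trans (finSuccEquiv' (Fin.last n)).symm)

lemma insPerm_at {n : ℕ} (p : Fin (n + 1)) (π : Equiv.Perm (Fin n)) :
    insPerm p π p = Fin.last n := by
  simp [insPerm]

lemma insPerm_succAbove {n : ℕ} (p : Fin (n + 1)) (π : Equiv.Perm (Fin n)) (i : Fin n) :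
    insPerm p π (p.succAbove i) = (π i).castSucc := by
  simp [insPerm]

lemma insPerm_bij (n : ℕ) :
    Function.Bijective (fun x : Equiv.Perm (Fin n) × Fin (n + 1) => insPerm x.2 x.1) := by
  rw [Fintype.bijective_iff_injective_and_card]
  constructor
  · rintro ⟨π, p⟩ ⟨π', p'⟩ h
    simp only at h
    have hp : p = p' := by
      apply (insPerm p' π').injective
      rw [insPerm_at, ← h, insPerm_at]
    subst hp
    have : π = π' := by
      ext i
      have := insPerm_succAbove p π i
      rw [h, insPerm_succAbove] at this
      exact congrArg Fin.val (Fin.castSucc_injective _ this).symm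
    rw [this]
  · simp [Fintype.card_perm, Nat.factorial_succ, mul_comm]

lemma permSeq_ins {n : ℕ} (p : Fin (n + 1)) (π : Equiv.Perm (Fin n)) (i : ℕ) (hi : i < n + 1) :
    permSeq (insPerm p π) i =
      if i < p then permSeq π i else if i = p then n else permSeq π (i - 1) := by
  have hp := p.isLt
  split_ifs with h1 h2
  · have hin : i < n := by omega
    have := insPerm_succAbove p π ⟨i, hin⟩
    rw [Fin.succAbove_of_castSucc_lt _ _ (by simpa [Fin.lt_def] using h1)] at this
    simp only [permSeq, hi, hin, dif_pos]
    exact congrArg Fin.val this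
  · subst h2
    simp only [permSeq, hi, dif_pos]
    exact congrArg Fin.val (insPerm_at p π)
  · have hin : i - 1 < n := by omega
    have := insPerm_succAbove p π ⟨i - 1, hin⟩
    rw [Fin.succAbove_of_le_castSucc _ _ (by simp [Fin.le_def]; omega)] at this
    simp only [permSeq, hi, hin, dif_pos]
    have h3 : (⟨i, hi⟩ : Fin (n+1)) = Fin.succ ⟨i - 1, hin⟩ := by
      ext; simp; omega
    rw [h3]
    exact congrArg Fin.val this

lemma permSeq_lt {n : ℕ} (π : Equiv.Perm (Fin n)) (i : ℕ) (hi : i < n) : permSeq π i < n := by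
  simp [permSeq, hi]

/-- gaps whose filling does not change the number of peaks -/
def goodGaps (n : ℕ) (g : ℕ → ℕ) : Finset ℕ :=
  {0, n} ∪ (pkSet n g ∪ (pkSet n g).image (· + 1))

lemma mem_pkSet {n : ℕ} {g : ℕ → ℕ} {i : ℕ} : i ∈ pkSet n g ↔
    1 ≤ i ∧ i + 1 < n ∧ g (i - 1) < g i ∧ g (i + 1) < g i := by
  simp only [pkSet, Finset.mem_filter, Finset.mem_range]
  constructor
  · exact fun h => h.2
  · exact fun h => ⟨by omega, h⟩

lemma not_adj {n : ℕ} {g : ℕ → ℕ} {i : ℕ} (h : i ∈ pkSet n g) : i + 1 ∉ pkSet n g := by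
  intro h'
  rw [mem_pkSet] at h h'
  have := h.2.2.2
  have := h'.2.2.1
  simp at this
  omega

lemma goodGaps_card {n : ℕ} (hn : 1 ≤ n) (g : ℕ → ℕ) :
    (goodGaps n g).card = 2 * (pkSet n g).card + 2 := by
  unfold goodGaps
  rw [Finset.card_union_of_disjoint, Finset.card_union_of_disjoint, Finset.card_image_of_injective,
    Finset.card_pair (by omega)]
  · ring
  · intro a b h; simpa using h
  · rw [Finset.disjoint_left]
    intro a ha hb
    obtain ⟨b, hb', rfl⟩ := Finset.mem_image.1 hb
    exact not_adj hb' ha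
  · rw [Finset.disjoint_left]
    intro a ha hb
    simp only [Finset.mem_union, Finset.mem_image, mem_pkSet, Finset.mem_insert,
      Finset.mem_singleton] at ha hb
    rcases hb with hb | ⟨b, hb, rfl⟩ <;> omega

lemma goodGaps_sub {n : ℕ} (g : ℕ → ℕ) : goodGaps n g ⊆ Finset.range (n + 1) := by
  intro a ha
  simp only [goodGaps, Finset.mem_union, Finset.mem_image, mem_pkSet, Finset.mem_insert,
      Finset.mem_singleton, Finset.mem_range] at ha ⊢
  rcases ha with ha | ha | ⟨b, hb, rfl⟩ <;> omega

def shiftMap (p i : ℕ) : ℕ := if i + 1 < p then i else if i ≤ p then p else i + 1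

lemma shift_inj {n : ℕ} (p : ℕ) (g : ℕ → ℕ) : Set.InjOn (shiftMap p) (pkSet n g : Set ℕ) := by
  intro a ha b hb h
  have h1 : a + 1 ≠ b := by rintro rfl; exact not_adj ha hb
  have h2 : b + 1 ≠ a := by rintro rfl; exact not_adj hb ha
  unfold shiftMap at h
  split_ifs at h <;> omega

lemma pk_ins {n : ℕ} (p : ℕ) (hp : p < n + 1) (g g' : ℕ → ℕ)
    (hg : ∀ i < n, g i < n)
    (hg' : ∀ i < n + 1, g' i = if i < p then g i else if i = p then n else g (i - 1)) (i : ℕ) :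
    i ∈ pkSet (n + 1) g' ↔ (i + 1 < p ∧ i ∈ pkSet n g) ∨ (i = p ∧ 1 ≤ p ∧ p < n) ∨
      (p + 1 < i ∧ i - 1 ∈ pkSet n g) := by
  by_cases hi : 1 ≤ i ∧ i + 1 < n + 1
  · obtain ⟨j, rfl⟩ : ∃ j, i = j + 1 := ⟨i - 1, by omega⟩
    have e1 := hg' j (by omega)
    have e2 := hg' (j + 1) (by omega)
    have e3 := hg' (j + 1 + 1) (by omega)
    have b1 := hg j (by omega)
    have b2 := hg (j + 1) (by omega)
    simp only [mem_pkSet, Nat.add_sub_cancel] at *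
    rcases lt_trichotomy (j + 1) p with h | h | h
    · rw [if_pos (by omega)] at e1 e2
      by_cases h' : j + 1 + 1 = p
      · rw [if_neg (by omega), if_pos h'] at e3
        omega
      · rw [if_pos (by omega)] at e3
        rw [e1, e2, e3]
        omega
    · rw [if_pos (by omega)] at e1
      rw [if_neg (by omega), if_pos h] at e2
      rw [if_neg (by omega), if_neg (by omega)] at e3
      rw [e1, e2, e3]
      omega
    · rw [if_neg (by omega), if_neg (by omega)] at e2 e3
      by_cases h' : j = p
      · rw [if_neg (by omega), if_pos h'] at e1
        omega
      · rw [if_neg (by omega), if_neg (by omega)] at e1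
        rw [e1, e2, e3]
        omega
  · simp only [mem_pkSet]
    omega

lemma pk_ins_card {n : ℕ} (p : ℕ) (hp : p < n + 1) (g g' : ℕ → ℕ)
    (hg : ∀ i < n, g i < n)
    (hg' : ∀ i < n + 1, g' i = if i < p then g i else if i = p then n else g (i - 1)) :
    (pkSet (n + 1) g').card = if p ∈ goodGaps n g then (pkSet n g).card
      else (pkSet n g).card + 1 := by
  have key := pk_ins p hp g g' hg hg'
  rw [← Finset.card_image_of_injOn (shift_inj (n := n) p g)]
  have bd : ∀ i ∈ pkSet n g, 1 ≤ i ∧ i + 1 < n := fun i hi => by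
    rw [mem_pkSet] at hi; exact ⟨hi.1, hi.2.1⟩
  have hA : p ∈ goodGaps n g ↔ p = 0 ∨ p = n ∨ p ∈ pkSet n g ∨ (1 ≤ p ∧ p - 1 ∈ pkSet n g) := by
    simp only [goodGaps, Finset.mem_union, Finset.mem_insert, Finset.mem_singleton,
      Finset.mem_image, or_assoc]
    have : (∃ a ∈ pkSet n g, a + 1 = p) ↔ (1 ≤ p ∧ p - 1 ∈ pkSet n g) := by
      constructor
      · rintro ⟨a, ha, rfl⟩; simpa using ha
      · rintro ⟨h, h'⟩; exact ⟨_, h', by omega⟩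
    rw [this]
  have himg : ∀ i, i ∈ (pkSet n g).image (shiftMap p) ↔ (i + 1 < p ∧ i ∈ pkSet n g) ∨
      (i = p ∧ (p ∈ pkSet n g ∨ (1 ≤ p ∧ p - 1 ∈ pkSet n g))) ∨
      (p + 1 < i ∧ i - 1 ∈ pkSet n g) := by
    intro i
    rw [Finset.mem_image]
    constructor
    · rintro ⟨a, ha, rfl⟩
      unfold shiftMap
      split_ifs with h1 h2
      · exact Or.inl ⟨h1, ha⟩
      · right; left
        refine ⟨rfl, ?_⟩
        rcases Nat.lt_or_ge a p with h | h
        · right; rw [show p - 1 = a by omega]; exact ⟨by omega, ha⟩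
        · left; rw [show p = a by omega]; exact ha
      · right; right
        exact ⟨by omega, by simpa using ha⟩
    · rintro (⟨h, h'⟩ | ⟨rfl, h | ⟨h, h'⟩⟩ | ⟨h, h'⟩)
      · exact ⟨i, h', by simp [shiftMap, h]⟩
      · exact ⟨i, h, by simp [shiftMap]⟩
      · exact ⟨i - 1, h', by unfold shiftMap; split_ifs <;> omega⟩
      · exact ⟨i - 1, h', by unfold shiftMap; split_ifs <;> omega⟩
  split_ifs with h
  · congr 1
    ext i
    rw [key, himg]
    rw [hA] at h
    have b1 := bd p
    have b2 := bd (p - 1)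
    constructor
    · rintro (h1 | h1 | h1)
      · exact Or.inl h1
      · refine Or.inr (Or.inl ⟨h1.1, ?_⟩)
        rcases h with h | h | h
        · omega
        · omega
        · exact h
      · exact Or.inr (Or.inr h1)
    · rintro (h1 | ⟨h1, h2 | h2⟩ | h1)
      · exact Or.inl h1
      · have := b1 h2
        exact Or.inr (Or.inl ⟨h1, by omega, by omega⟩)
      · have := b2 h2.2
        exact Or.inr (Or.inl ⟨h1, by omega, by omega⟩)
      · exact Or.inr (Or.inr h1)
  · rw [hA] at h
    push Not at h
    have hnot : p ∉ (pkSet n g).image (shiftMap p) := by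
      rw [himg]
      rintro (h1 | ⟨h1, h2 | h2⟩ | h1)
      · omega
      · exact h.2.2.1 h2
      · exact h.2.2.2 h2.1 h2.2
      · omega
    rw [← Finset.card_insert_of_notMem hnot]
    congr 1
    ext i
    rw [key, Finset.mem_insert, himg]
    constructor
    · rintro (h1 | h1 | h1)
      · exact Or.inr (Or.inl h1)
      · exact Or.inl h1.1
      · exact Or.inr (Or.inr (Or.inr h1))
    · rintro (h1 | h1 | ⟨h1, h2⟩ | h1)
      · exact Or.inr (Or.inl ⟨h1, by omega, by omega⟩)
      · exact Or.inl h1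
      · exact Or.inr (Or.inl ⟨h1, by omega, by omega⟩)
      · exact Or.inr (Or.inr h1)

lemma numPeaks_bound {n : ℕ} (hn : 1 ≤ n) (π : Equiv.Perm (Fin n)) : 2 * numPeaks π + 1 ≤ n := by
  have h1 := goodGaps_card hn (permSeq π)
  have h2 := Finset.card_le_card (goodGaps_sub (n := n) (permSeq π))
  rw [Finset.card_range] at h2
  rw [numPeaks_eq]
  omega

lemma sum_succ {n : ℕ} (hn : 1 ≤ n) (h : ℕ → ℝ) :
    ∑ σ : Equiv.Perm (Fin (n + 1)), h (numPeaks σ) =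
      ∑ π : Equiv.Perm (Fin n), ((2 * numPeaks π + 2 : ℕ) * h (numPeaks π) +
        (n - 1 - 2 * numPeaks π : ℕ) * h (numPeaks π + 1)) := by
  rw [← (insPerm_bij n).sum_comp, Fintype.sum_prod_type]
  refine Finset.sum_congr rfl fun π _ => ?_
  have h1 : ∀ p : Fin (n + 1), h (numPeaks (insPerm p π)) =
      if (p : ℕ) ∈ goodGaps n (permSeq π) then h (numPeaks π) else h (numPeaks π + 1) := by
    intro p
    rw [numPeaks_eq, numPeaks_eq, pk_ins_card p p.isLt (permSeq π) _ (permSeq_lt π)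
      (permSeq_ins p π)]
    split_ifs <;> rfl
  simp only [h1]
  rw [Fin.sum_univ_eq_sum_range (fun p => if p ∈ goodGaps n (permSeq π) then h (numPeaks π)
    else h (numPeaks π + 1)) (n + 1), Finset.sum_ite, Finset.sum_const, Finset.sum_const]
  have e1 : (Finset.range (n + 1)).filter (· ∈ goodGaps n (permSeq π)) = goodGaps n (permSeq π) := by
    rw [Finset.filter_mem_eq_inter, Finset.inter_eq_right]
    exact goodGaps_sub _
  have e2 := Finset.card_filter_add_card_filter_not (s := Finset.range (n + 1))
    (· ∈ goodGaps n (permSeq π))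
  rw [e1, goodGaps_card hn, ← numPeaks_eq, Finset.card_range] at e2
  have e3 : ((Finset.range (n + 1)).filter (· ∉ goodGaps n (permSeq π))).card
    = n - 1 - 2 * numPeaks π := by omega
  rw [e1, e3, goodGaps_card hn, ← numPeaks_eq, nsmul_eq_mul, nsmul_eq_mul]

/-- bivariate peak sum -/
noncomputable def peakU (t : ℝ) (n : ℕ) (w b : ℝ) : ℝ :=
  ∑ π : Equiv.Perm (Fin n), t ^ numPeaks π * w ^ (numPeaks π + 1) * b ^ (n - 1 - 2 * numPeaks π)

lemma peakU_deriv (t : ℝ) {n : ℕ} (hn : 1 ≤ n) (w b : ℝ → ℝ) (z : ℝ)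
    (hw : HasDerivAt w (2 * w z * b z) z) (hb : HasDerivAt b (t * w z) z) :
    HasDerivAt (fun z => peakU t n (w z) (b z)) (peakU t (n + 1) (w z) (b z)) z := by
  unfold peakU
  rw [sum_succ hn (fun k => t ^ k * w z ^ (k + 1) * b z ^ (n + 1 - 1 - 2 * k))]
  refine HasDerivAt.fun_sum fun π _ => ?_
  have hk := numPeaks_bound hn π
  generalize numPeaks π = k at *
  obtain ⟨m, rfl⟩ : ∃ m, n = 2 * k + 1 + m := ⟨n - (2 * k + 1), by omega⟩
  have := ((hw.fun_pow (k + 1)).const_mul (t ^ k)).mul (hb.fun_pow m)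
  rw [show 2 * k + 1 + m - 1 - 2 * k = m by omega, show 2 * k + 1 + m + 1 - 1 - 2 * k = m + 1 by omega,
    show 2 * k + 1 + m + 1 - 1 - 2 * (k + 1) = m - 1 by omega]
  refine this.congr_deriv ?_
  push_cast
  ring

lemma peakU_one (t w b : ℝ) : peakU t 1 w b = w := by
  have : ∀ π : Equiv.Perm (Fin 1), numPeaks π = 0 := fun π => by
    have := numPeaks_bound le_rfl π; omega
  simp [peakU, this]

/-- For every real `t < 1`, there is `ε > 0` such that for all real `z` with `|z| < ε`,
the series `∑_{n≥0} Pₙ(t) zⁿ/n!` converges and equals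
`√(1-t) / (√(1-t) - tanh(z√(1-t)))`. -/
theorem peak_poly_egf (t : ℝ) (ht : t < 1) :
    ∃ ε > 0, ∀ z : ℝ, |z| < ε →
      HasSum (fun n : ℕ => peakPoly n t * z ^ n / n.factorial)
        (Real.sqrt (1 - t) /
          (Real.sqrt (1 - t) - Real.tanh (z * Real.sqrt (1 - t)))) := by
  obtain ⟨s, hs⟩ : ∃ s, s = Real.sqrt (1 - t) := ⟨_, rfl⟩
  have hs0 : 0 < s := by rw [hs]; exact Real.sqrt_pos.2 (by linarith)
  have hst : t = 1 - s ^ 2 := by rw [hs, Real.sq_sqrt (by linarith)]; ring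
  rw [← hs]
  set D : ℝ → ℝ := fun z => s * Real.cosh (z * s) - Real.sinh (z * s) with hD
  set F : ℝ → ℝ := fun z => s * Real.cosh (z * s) / D z with hF
  set w : ℝ → ℝ := fun z => s ^ 2 / D z ^ 2 with hw
  set b : ℝ → ℝ := fun z => 1 + t * (F z - 1) with hb
  have hFt : ∀ z, s / (s - Real.tanh (z * s)) = F z := by
    intro z
    have hc := (Real.cosh_pos (z * s)).ne'
    simp only [hF, hD]
    rw [Real.tanh_eq_sinh_div_cosh, show s - Real.sinh (z * s) / Real.cosh (z * s) =
      (s * Real.cosh (z * s) - Real.sinh (z * s)) / Real.cosh (z * s) by field_simp, div_div_eq_mul_div]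
  have hlin : ∀ z, HasDerivAt (fun z : ℝ => z * s) s z := fun z => by
    simpa using (hasDerivAt_id z).mul_const s
  have dcosh : ∀ z, HasDerivAt (fun z : ℝ => Real.cosh (z * s)) (Real.sinh (z * s) * s) z :=
    fun z => (hlin z).cosh
  have dsinh : ∀ z, HasDerivAt (fun z : ℝ => Real.sinh (z * s)) (Real.cosh (z * s) * s) z :=
    fun z => (hlin z).sinh
  have dD : ∀ z, HasDerivAt D (s * (Real.sinh (z * s) * s) - Real.cosh (z * s) * s) z :=
    fun z => ((dcosh z).const_mul s).sub (dsinh z)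
  have dF : ∀ z, D z ≠ 0 → HasDerivAt F (w z) z := by
    intro z hz
    refine (((dcosh z).const_mul s).div (dD z) hz).congr_deriv ?_
    symm
    change s ^ 2 / D z ^ 2 = _
    congr 1
    simp only [hD]
    have := Real.cosh_sq (z * s)
    linear_combination (-s ^ 2) * this
  have db : ∀ z, D z ≠ 0 → HasDerivAt b (t * w z) z := by
    intro z hz
    exact (((dF z hz).sub_const 1).const_mul t).const_add 1
  have dw : ∀ z, D z ≠ 0 → HasDerivAt w (2 * w z * b z) z := by
    intro z hz
    refine ((hasDerivAt_const z (s ^ 2)).div ((dD z).fun_pow 2) (pow_ne_zero 2 hz)).congr_deriv ?_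
    symm
    have h1 : Real.sinh (z * s) = s * Real.cosh (z * s) - D z := by simp only [hD]; ring
    change 2 * (s ^ 2 / D z ^ 2) * (1 + t * (s * Real.cosh (z * s) / D z - 1)) = _
    rw [h1, hst]
    field_simp
    ring
  have hD0 : D 0 = s := by simp [hD]
  have hev : ∀ᶠ z in nhds 0, D z ≠ 0 :=
    (dD 0).continuousAt.eventually_ne (by rw [hD0]; exact hs0.ne')
  have hit : ∀ n, iteratedDeriv (n + 1) F =ᶠ[nhds 0] fun z => peakU t (n + 1) (w z) (b z) := by
    intro n
    induction n with
    | zero =>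
      filter_upwards [hev] with z hz
      rw [iteratedDeriv_one, (dF z hz).deriv, peakU_one]
    | succ n ih =>
      rw [iteratedDeriv_succ]
      filter_upwards [hev, ih.deriv] with z hz h
      rw [h]
      exact (peakU_deriv t (by omega) w b z (dw z hz) (db z hz)).deriv
  have hF0 : F 0 = 1 := by
    simp only [hF, hD0]; simp [hs0.ne']
  have hval : ∀ n, iteratedDeriv n F 0 = peakPoly n t := by
    intro n
    cases n with
    | zero => 
      have : ∀ π : Equiv.Perm (Fin 0), numPeaks π = 0 := fun π => by simp [numPeaks]
      simp [iteratedDeriv_zero, hF0, peakPoly, this]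
    | succ n =>
      rw [(hit n).self_of_nhds]
      have h1 : w 0 = 1 := by simp only [hw, hD0]; field_simp
      have h2 : b 0 = 1 := by simp [hb, hF0]
      simp [peakU, peakPoly, h1, h2]
  have hcosh : AnalyticAt ℝ (fun z : ℝ => Real.cosh (z * s)) 0 := by
    simp only [Real.cosh_eq]; fun_prop
  have hsinh : AnalyticAt ℝ (fun z : ℝ => Real.sinh (z * s)) 0 := by
    simp only [Real.sinh_eq]; fun_prop
  have hAD : AnalyticAt ℝ D 0 := (analyticAt_const.mul hcosh).sub hsinh
  have hA : AnalyticAt ℝ F 0 :=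
    (analyticAt_const.mul hcosh).div hAD (by rw [hD0]; exact hs0.ne')
  have hp := hA.hasFPowerSeriesAt
  have hsum := hp.eventually_hasSum
  obtain ⟨ε, hε, H⟩ := Metric.eventually_nhds_iff.1 hsum
  refine ⟨ε, hε, fun z hz => ?_⟩
  have := H (y := z) (by simpa using hz)
  rw [zero_add] at this
  rw [hFt]
  refine Eq.mp (congrArg (fun g => HasSum g (F z)) (funext fun n => ?_)) this
  simp [FormalMultilinearSeries.ofScalars, hval]
  ring
end

section
/- There exists ε > 0 such that for all real z with |z| < ε the series ∑_{n≥0} fₙ zⁿ/n! converges and equals √2 / (√2 − tanh(z·√2)). -/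
def bw (n : ℕ) (w : ℕ → ℕ) (i : ℕ) : ℕ :=
  if 1 ≤ i ∧ i + 1 < n ∧ w (i - 1) < w i ∧ w (i + 1) < w i then 1 else 0

def insW (n : ℕ) (w : ℕ → ℕ) (p j : ℕ) : ℕ :=
  if j < p then w j else if j = p then n else w (j - 1)

def cw (n : ℕ) (w : ℕ → ℕ) (p i : ℕ) : ℕ :=
  if i = p ∨ i + 1 = p then 0 else bw n w i

def prevb (n : ℕ) (w : ℕ → ℕ) (p : ℕ) : ℕ := if p = 0 then 0 else bw n w (p - 1)

lemma bw_low (n : ℕ) (w : ℕ → ℕ) (p i : ℕ) (hp : p ≤ n) (hw : ∀ j < n, w j < n) (hi : i < p) :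
    bw (n + 1) (insW n w p) i = cw n w p i := by
  have h1 := hw i (by omega)
  unfold bw cw bw insW
  rcases Nat.lt_or_ge (i + 1) p with h | h
  · have e1 : i - 1 < p := by omega
    have e2 : ¬ (i = p ∨ i + 1 = p) := by omega
    have e3 : i + 1 < n := by omega
    have e4 : i + 1 < n + 1 := by omega
    simp only [h, e1, e2, hi, e3, e4, if_true, if_false]
  · have e2 : i + 1 = p := by omega
    subst e2
    simp
    omega

lemma bw_high (n : ℕ) (w : ℕ → ℕ) (p i : ℕ) (hw : ∀ j < n, w j < n) (hi : p ≤ i) :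
    bw (n + 1) (insW n w p) (i + 1) = cw n w p i := by
  unfold bw cw bw insW
  rcases Nat.lt_or_ge p i with h | h
  · have e1 : ¬ (i < p) := by omega
    have e2 : ¬ (i = p ∨ i + 1 = p) := by omega
    have e3 : ¬ (i + 1 < p) := by omega
    have e4 : ¬ (i + 1 + 1 < p) := by omega
    have e5 : ¬ (i + 1 + 1 = p) := by omega
    have e6 : ¬ (i + 1 = p) := by omega
    have e7 : ¬ (i = p) := by omega
    have e8 : 1 ≤ i := by omega
    simp [e1, e3, e4, e5, e6, e7, e8]
  · have e2 : i = p := by omega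
    subst e2
    have := hw i
    simp
    omega

lemma bw_mid (n : ℕ) (w : ℕ → ℕ) (p : ℕ) (hw : ∀ j < n, w j < n) :
    bw (n + 1) (insW n w p) p = if 0 < p ∧ p < n then 1 else 0 := by
  unfold bw insW
  by_cases h : 0 < p ∧ p < n
  · have h1 := hw p h.2
    have h2 := hw (p - 1) (by omega)
    simp [h, h1, h2]
    omega
  · rw [if_neg h, if_neg]
    omega

lemma sum_ins (b c : ℕ → ℕ) (p n : ℕ) (hp : p ≤ n) (h1 : ∀ i < p, b i = c i)
    (h2 : ∀ i, p ≤ i → b (i + 1) = c i) :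
    ∑ i ∈ Finset.range (n + 1), b i = b p + ∑ i ∈ Finset.range n, c i := by
  induction n, hp using Nat.le_induction with
  | base =>
    rw [Finset.sum_range_succ, add_comm]
    congr 1
    exact Finset.sum_congr rfl fun i hi => h1 i (Finset.mem_range.1 hi)
  | succ m hm ih =>
    rw [Finset.sum_range_succ, ih, h2 m hm, Finset.sum_range_succ c]
    omega

lemma bw_zero_of_le (n : ℕ) (w : ℕ → ℕ) (i : ℕ) (h : n ≤ i + 1) : bw n w i = 0 := by
  unfold bw; rw [if_neg]; omega

lemma bw_zero (n : ℕ) (w : ℕ → ℕ) : bw n w 0 = 0 := by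
  unfold bw; simp

lemma sum_cw (n : ℕ) (w : ℕ → ℕ) (p : ℕ) (hp : p ≤ n) :
    ∑ i ∈ Finset.range n, bw n w i
      = ∑ i ∈ Finset.range n, cw n w p i + bw n w p + prevb n w p := by
  have key : ∀ i, bw n w i = cw n w p i + (if i = p then bw n w i else 0)
      + (if i + 1 = p then bw n w i else 0) := by
    intro i; unfold cw
    by_cases h : i = p
    · simp [h]
    · by_cases h' : i + 1 = p <;> simp [h, h']
  rw [Finset.sum_congr rfl fun i _ => key i, Finset.sum_add_distrib, Finset.sum_add_distrib]
  congr 1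
  · congr 1
    rw [Finset.sum_ite_eq' (Finset.range n) p]
    split_ifs with h
    · rfl
    · rw [bw_zero_of_le]
      simp at h; omega
  · unfold prevb
    rcases p with _ | q
    · simp
    · simp only [Nat.add_right_cancel_iff]
      rw [Finset.sum_ite_eq' (Finset.range n) q]
      have : q < n := by omega
      simp [this]

lemma sum_bw_ins (n : ℕ) (w : ℕ → ℕ) (p : ℕ) (hp : p ≤ n) (hw : ∀ j < n, w j < n) :
    ∑ i ∈ Finset.range (n + 1), bw (n + 1) (insW n w p) i + bw n w p + prevb n w p
      = (if 0 < p ∧ p < n then 1 else 0) + ∑ i ∈ Finset.range n, bw n w i := by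
  rw [sum_ins _ (cw n w p) p n hp (fun i hi => bw_low n w p i hp hw hi)
    (fun i hi => bw_high n w p i hw hi), bw_mid n w p hw, sum_cw n w p hp]
  omega

lemma bw_adj (n : ℕ) (w : ℕ → ℕ) (p : ℕ) : bw n w p + prevb n w p ≤ 1 := by
  unfold prevb bw
  rcases p with _ | q
  · simp
  · simp only [Nat.add_sub_cancel]
    split_ifs <;> omega

lemma sum_adj (m : ℕ) (w : ℕ → ℕ) :
    ∑ p ∈ Finset.range m, (bw (m + 1) w (p + 1) + prevb (m + 1) w (p + 1))
      = 2 * ∑ i ∈ Finset.range (m + 1), bw (m + 1) w i := by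
  have h0 : ∀ p, prevb (m + 1) w (p + 1) = bw (m + 1) w p := fun p => by simp [prevb]
  simp only [h0, Finset.sum_add_distrib]
  have h1 := Finset.sum_range_succ (bw (m + 1) w) m
  have h2 := Finset.sum_range_succ' (bw (m + 1) w) m
  rw [bw_zero_of_le (m + 1) w m le_rfl] at h1
  rw [bw_zero] at h2
  omega

lemma two_pk_le (m : ℕ) (w : ℕ → ℕ) :
    2 * ∑ i ∈ Finset.range (m + 1), bw (m + 1) w i ≤ m := by
  rw [← sum_adj]
  calc _ ≤ ∑ p ∈ Finset.range m, 1 := Finset.sum_le_sum fun p _ => bw_adj _ _ _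
    _ = m := by simp

lemma sum_g (m : ℕ) (w : ℕ → ℕ) (hw : ∀ j < m + 1, w j < m + 1) (g : ℕ → ℝ) (k : ℕ)
    (hk : k = ∑ i ∈ Finset.range (m + 1), bw (m + 1) w i) :
    ∑ p ∈ Finset.range (m + 2),
      g (∑ i ∈ Finset.range (m + 2), bw (m + 2) (insW (m + 1) w p) i)
      = (2 * k + 2) * g k + ((m : ℝ) - 2 * k) * g (k + 1) := by
  have A : ∀ p ≤ m + 1, _ := fun p hp => sum_bw_ins (m + 1) w p hp hw
  rw [Finset.sum_range_succ, Finset.sum_range_succ']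
  have e1 : ∑ i ∈ Finset.range (m + 2), bw (m + 2) (insW (m + 1) w (m + 1)) i = k := by
    have := A (m + 1) le_rfl
    rw [bw_zero_of_le _ _ _ (by omega), prevb, if_neg (by omega),
      bw_zero_of_le _ _ _ (by omega), ← hk] at this
    simpa using this
  have e2 : ∑ i ∈ Finset.range (m + 2), bw (m + 2) (insW (m + 1) w 0) i = k := by
    have := A 0 (by omega)
    rw [bw_zero, prevb, if_pos rfl, ← hk] at this
    simpa using this
  have e3 : ∀ p ∈ Finset.range m,
      g (∑ i ∈ Finset.range (m + 2), bw (m + 2) (insW (m + 1) w (p + 1)) i)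
      = g (k + 1) + ((bw (m + 1) w (p + 1) + prevb (m + 1) w (p + 1) : ℕ) : ℝ)
        * (g k - g (k + 1)) := by
    intro p hp
    rw [Finset.mem_range] at hp
    have h := A (p + 1) (by omega)
    rw [if_pos (by omega), ← hk, show m + 1 + 1 = m + 2 from rfl] at h
    have h1 := bw_adj (m + 1) w (p + 1)
    rcases Nat.le_one_iff_eq_zero_or_eq_one.1 h1 with h2 | h2
    · rw [h2, show (∑ i ∈ Finset.range (m + 2), bw (m + 2) (insW (m + 1) w (p + 1)) i) = k + 1 by
        omega]
      simp
    · rw [h2, show (∑ i ∈ Finset.range (m + 2), bw (m + 2) (insW (m + 1) w (p + 1)) i) = k by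
        omega]
      simp
  rw [Finset.sum_congr rfl e3, e1, e2, Finset.sum_add_distrib, ← Finset.sum_mul, ← Nat.cast_sum,
    sum_adj, ← hk]
  simp
  ring

def wd {n : ℕ} (σ : Equiv.Perm (Fin n)) (i : ℕ) : ℕ := if h : i < n then (σ ⟨i, h⟩ : ℕ) else 0

lemma wd_lt {n : ℕ} (σ : Equiv.Perm (Fin n)) (i : ℕ) (h : i < n) : wd σ i < n := by
  simp [wd, h]

lemma numPeaks_eq_s1 {n : ℕ} (σ : Equiv.Perm (Fin n)) :
    numPeaks σ = ∑ i ∈ Finset.range n, bw n (wd σ) i := by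
  classical
  unfold numPeaks
  rw [Finset.card_filter, Finset.sum_range]
  refine Finset.sum_congr rfl fun i _ => ?_
  unfold bw
  congr 1
  have hi := i.2
  have h1 : (i : ℕ) - 1 < n := by omega
  by_cases h2 : (i : ℕ) + 1 < n
  · simp [wd, h1, h2]
    tauto
  · simp [h2]

def insP {n : ℕ} (p : Fin (n + 1)) (σ : Equiv.Perm (Fin n)) : Equiv.Perm (Fin (n + 1)) :=
  (finSuccEquiv' p).trans ((Equiv.optionCongr σ).trans (finSuccEquiv' (Fin.last n)).symm)

lemma insP_self {n : ℕ} (p : Fin (n + 1)) (σ : Equiv.Perm (Fin n)) :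
    insP p σ p = Fin.last n := by simp [insP]

lemma insP_succAbove {n : ℕ} (p : Fin (n + 1)) (σ : Equiv.Perm (Fin n)) (i : Fin n) :
    insP p σ (p.succAbove i) = (σ i).castSucc := by simp [insP]

lemma insP_bij (n : ℕ) : Function.Bijective
    (fun x : Fin (n + 1) × Equiv.Perm (Fin n) => insP x.1 x.2) := by
  rw [Fintype.bijective_iff_injective_and_card]
  constructor
  · rintro ⟨p, σ⟩ ⟨q, τ⟩ h
    simp only at h
    have hpq : p = q := by
      apply (insP q τ).injective
      rw [insP_self, ← h, insP_self]
    subst hpq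
    congr 1
    ext i
    have := congrArg (fun e => ((e (p.succAbove i) : Fin (n + 1)) : ℕ)) h
    simpa [insP_succAbove] using this
  · simp [Fintype.card_perm, Nat.factorial_succ]

lemma wd_insP {n : ℕ} (p : Fin (n + 1)) (σ : Equiv.Perm (Fin n)) (j : ℕ) (hj : j < n + 1) :
    wd (insP p σ) j = insW n (wd σ) p j := by
  unfold insW
  rcases Fin.eq_self_or_eq_succAbove p ⟨j, hj⟩ with h | ⟨i, h⟩
  · have : j = p := by rw [← h]
    subst this
    simp only [wd, hj, dite_true, lt_irrefl, if_false, if_true]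
    rw [h, insP_self]; simp
  · have e : wd (insP p σ) j = σ i := by
      simp only [wd, hj, dite_true]
      rw [h, insP_succAbove]; simp
    rw [e]
    have hv := congrArg Fin.val h
    simp only at hv
    rcases lt_or_ge i.castSucc p with h1 | h1
    · rw [Fin.succAbove_of_castSucc_lt _ _ h1] at hv
      simp at hv
      have : j < p := by rw [hv]; exact h1
      rw [if_pos this, hv]
      simp [wd]
    · rw [Fin.succAbove_of_le_castSucc _ _ h1] at hv
      simp at hv
      have h2 : (p : ℕ) ≤ i := h1
      rw [if_neg (by omega), if_neg (by omega), hv]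
      simp [wd]

lemma bw_congr (n : ℕ) (w w' : ℕ → ℕ) (h : ∀ j < n, w j = w' j) (i : ℕ) :
    bw n w i = bw n w' i := by
  unfold bw
  by_cases hi : i + 1 < n
  · rw [h i (by omega), h (i - 1) (by omega), h (i + 1) hi]
  · simp [hi]

lemma sum_perm (m : ℕ) (g : ℕ → ℝ) :
    ∑ π : Equiv.Perm (Fin (m + 2)), g (numPeaks π)
      = ∑ σ : Equiv.Perm (Fin (m + 1)), ((2 * (numPeaks σ : ℝ) + 2) * g (numPeaks σ)
          + ((m : ℝ) - 2 * numPeaks σ) * g (numPeaks σ + 1)) := by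
  rw [← (insP_bij (m + 1)).sum_comp, Fintype.sum_prod_type_right]
  refine Finset.sum_congr rfl fun σ _ => ?_
  rw [← sum_g m (wd σ) (wd_lt σ) g (numPeaks σ) (numPeaks_eq_s1 σ), Finset.sum_range]
  refine Finset.sum_congr rfl fun p _ => ?_
  simp only [numPeaks_eq_s1]
  congr 1
  exact Finset.sum_congr rfl fun i _ => bw_congr _ _ _ (fun j hj => wd_insP p σ j hj) i

noncomputable def FF (z : ℝ) : ℝ := Real.sqrt 2 / (Real.sqrt 2 - Real.tanh (z * Real.sqrt 2))

lemma den_ne (z : ℝ) : Real.sqrt 2 - Real.tanh (z * Real.sqrt 2) ≠ 0 := by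
  have h := Real.tanh_lt_one (z * Real.sqrt 2)
  have h2 : 1 < Real.sqrt 2 := by rw [Real.lt_sqrt] <;> norm_num
  linarith

lemma FF_deriv (z : ℝ) : HasDerivAt FF (2 - (2 - FF z) ^ 2) z := by
  have hd := den_ne z
  have hs : Real.sqrt 2 ^ 2 = 2 := Real.sq_sqrt (by norm_num)
  have ht : ∀ x, HasDerivAt Real.tanh (1 - Real.tanh x ^ 2) x := by
    intro x
    have hc := (Real.cosh_pos x).ne'
    have h := (Real.hasDerivAt_sinh x).div (Real.hasDerivAt_cosh x) hc
    have e : Real.tanh = Real.sinh / Real.cosh := by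
      funext y; exact Real.tanh_eq_sinh_div_cosh y
    rw [e]
    refine h.congr_deriv ?_
    simp only [Pi.div_apply]
    field_simp
  have h1 : HasDerivAt (fun z : ℝ => z * Real.sqrt 2) (Real.sqrt 2) z := by
    simpa using (hasDerivAt_id z).mul_const (Real.sqrt 2)
  have h2 := (ht (z * Real.sqrt 2)).comp z h1
  have h3 := (hasDerivAt_const z (Real.sqrt 2)).div (h2.const_sub (Real.sqrt 2)) hd
  refine HasDerivAt.congr_deriv (f := FF) h3 ?_
  unfold FF
  simp only [Function.comp]
  generalize Real.tanh (z * Real.sqrt 2) = T at *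
  generalize Real.sqrt 2 = s at *
  field_simp
  linear_combination (-T ^ 2) * hs

lemma FF_analytic : AnalyticAt ℝ FF 0 := by
  have e : Real.tanh = fun y => Real.sinh y / Real.cosh y := by
    funext y; exact Real.tanh_eq_sinh_div_cosh y
  unfold FF
  refine AnalyticAt.div analyticAt_const (AnalyticAt.sub analyticAt_const ?_) (den_ne 0)
  have h1 : AnalyticAt ℝ (fun z : ℝ => z * Real.sqrt 2) 0 := analyticAt_id.mul analyticAt_const
  have h2 : AnalyticAt ℝ Real.tanh (0 * Real.sqrt 2) := by
    rw [e]
    exact Real.analyticAt_sinh.div Real.analyticAt_cosh (Real.cosh_pos _).ne'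
  exact AnalyticAt.fun_comp (f := fun z : ℝ => z * Real.sqrt 2) h2 h1

lemma FF_iter (m : ℕ) : iteratedDeriv (m + 1) FF = fun z =>
    - ∑ π : Equiv.Perm (Fin (m + 1)),
      ((2 - FF z) ^ 2 - 2) ^ (numPeaks π + 1) * (2 - FF z) ^ (m - 2 * numPeaks π) := by
  induction m with
  | zero =>
    funext z
    rw [zero_add, iteratedDeriv_one, (FF_deriv z).deriv]
    have : ∀ π : Equiv.Perm (Fin (0 + 1)), numPeaks π = 0 := by
      intro π
      have := two_pk_le 0 (wd π)
      rw [← numPeaks_eq_s1] at this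
      omega
    simp [this]
  | succ m ih =>
    rw [iteratedDeriv_succ, ih]
    funext z
    have hY : HasDerivAt (fun z => 2 - FF z) ((2 - FF z) ^ 2 - 2) z := by
      have := (FF_deriv z).const_sub 2
      simpa using this
    have hX : HasDerivAt (fun z => (2 - FF z) ^ 2 - 2)
        (2 * ((2 - FF z) ^ 2 - 2) * (2 - FF z)) z := by
      have := (hY.pow 2).sub_const 2
      refine this.congr_deriv ?_
      push_cast; ring
    have hS : HasDerivAt (fun z => - ∑ π : Equiv.Perm (Fin (m + 1)),
      ((2 - FF z) ^ 2 - 2) ^ (numPeaks π + 1) * (2 - FF z) ^ (m - 2 * numPeaks π)) _ z :=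
      (HasDerivAt.fun_sum fun π _ =>
        (hX.fun_pow (numPeaks π + 1)).fun_mul (hY.fun_pow (m - 2 * numPeaks π))).fun_neg
    rw [hS.deriv]
    rw [sum_perm m (fun k => ((2 - FF z) ^ 2 - 2) ^ (k + 1) * (2 - FF z) ^ (m + 1 - 2 * k))]
    congr 1
    refine Finset.sum_congr rfl fun π _ => ?_
    have hk := two_pk_le m (wd π)
    rw [← numPeaks_eq_s1] at hk
    obtain ⟨r, hr⟩ := Nat.exists_eq_add_of_le hk
    generalize numPeaks π = k at *
    subst hr
    rw [show 2 * k + r - 2 * k = r by omega, show 2 * k + r + 1 - 2 * k = r + 1 by omega,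
      show 2 * k + r + 1 - 2 * (k + 1) = r - 1 by omega]
    push_cast
    ring_nf

lemma FF_zero : FF 0 = 1 := by simp [FF]

lemma FF_coeff (n : ℕ) : iteratedDeriv n FF 0 = f n := by
  rcases n with _ | m
  · simp only [iteratedDeriv_zero, FF_zero, f, peakPoly]
    simp [numPeaks]
  · rw [FF_iter]
    simp only [FF_zero, f, peakPoly]
    rw [← Finset.sum_neg_distrib]
    refine Finset.sum_congr rfl fun π _ => ?_
    norm_num [pow_succ]

/-- There is `ε > 0` such that for all real `z` with `|z| < ε`, the series
`∑_{n≥0} fₙ zⁿ/n!` converges and equals `√2 / (√2 - tanh(z√2))`. -/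
theorem f_egf :
    ∃ ε > 0, ∀ z : ℝ, |z| < ε →
      HasSum (fun n : ℕ => f n * z ^ n / n.factorial)
        (Real.sqrt 2 / (Real.sqrt 2 - Real.tanh (z * Real.sqrt 2))) := by
  obtain ⟨r, hr⟩ := FF_analytic.hasFPowerSeriesAt
  obtain ⟨ε, hε, hle⟩ : ∃ ε : ℝ, 0 < ε ∧ ENNReal.ofReal ε ≤ r := by
    rcases eq_or_ne r ⊤ with h | h
    · exact ⟨1, one_pos, by simp [h]⟩
    · exact ⟨r.toReal, ENNReal.toReal_pos hr.r_pos.ne' h, by rw [ENNReal.ofReal_toReal h]⟩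
  refine ⟨ε, hε, fun z hz => ?_⟩
  have hmem : z ∈ Metric.eball (0 : ℝ) r := by
    rw [Metric.mem_eball, edist_dist, Real.dist_eq, sub_zero]
    exact lt_of_lt_of_le ((ENNReal.ofReal_lt_ofReal_iff hε).2 hz) hle
  have h := hr.hasSum hmem
  rw [zero_add] at h
  change HasSum _ (FF z)
  have e : (fun n : ℕ => f n * z ^ n / n.factorial) = fun n =>
      (FormalMultilinearSeries.ofScalars ℝ
        (fun n => iteratedDeriv n FF 0 / (n.factorial : ℝ)) n) fun _ => z := by
    funext n
    simp [FF_coeff, FormalMultilinearSeries.ofScalars_apply_eq]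
    ring
  rw [e]
  exact h
end

section
/- There exists α with 0 < α < 1/ρ such that fₙ = −2 ρ^{−(n+1)} cos((n+1)θ) · n! + O(αⁿ · n!) as n → ∞, where ρ = √((log(3+2√2))² + π²)/(2√2) and θ = arctan(π / log(3+2√2)). -/
namespace PkAux
open Finset

/-- peak set of a sequence -/
def pkS (n : ℕ) (A : ℕ → ℕ) : Finset ℕ :=
  (range n).filter fun j => 1 ≤ j ∧ j + 1 < n ∧ A (j - 1) < A j ∧ A (j + 1) < A j

def insA (p n : ℕ) (A : ℕ → ℕ) : ℕ → ℕ := fun j =>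
  if j < p then A j else if j = p then n else A (j - 1)

lemma pkS_ins (n : ℕ) (A : ℕ → ℕ) (hA : ∀ j < n, A j < n) (p : ℕ) (hp : p ≤ n) :
    pkS (n + 1) (insA p n A) =
      ((pkS n A).filter (fun j => j + 1 < p) ∪
        ((pkS n A).filter (fun j => p < j)).map (addRightEmbedding 1)) ∪
        (if 0 < p ∧ p < n then {p} else ∅) := by
  ext j
  have hA' : ∀ j, A j < n ∨ n ≤ j := fun j => by
    rcases lt_or_ge j n with h | h
    · exact Or.inl (hA j h)
    · exact Or.inr h
  have h0 := hA' j
  have h1 := hA' (j - 1)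
  have h2 := hA' (j + 1)
  have h3 := hA' (j - 1 - 1)
  have e : (j ∈ (if 0 < p ∧ p < n then ({p} : Finset ℕ) else ∅)) ↔ (0 < p ∧ p < n ∧ j = p) := by
    split_ifs with h <;> simp <;> omega
  rw [mem_union, mem_union, e]
  simp only [pkS, mem_filter, mem_range, mem_map, addRightEmbedding_apply]
  have e2 : (∃ a, ((a < n ∧ 1 ≤ a ∧ a + 1 < n ∧ A (a - 1) < A a ∧ A (a + 1) < A a) ∧ p < a) ∧ a + 1 = j) ↔
     (1 ≤ j ∧ (j-1 < n ∧ 1 ≤ j-1 ∧ j < n ∧ A (j -1 - 1) < A (j-1) ∧ A j < A (j-1)) ∧ p < j-1) := by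
    constructor
    · rintro ⟨a, h, rfl⟩
      simp only [Nat.add_sub_cancel]
      omega
    · rintro ⟨h, h'⟩
      refine ⟨j - 1, ?_, by omega⟩
      rw [show j - 1 + 1 = j by omega]
      exact h'
  rw [e2]
  clear e2 e
  rcases lt_trichotomy (j + 1) p with h | h | h
  · simp only [insA, if_pos h, if_pos (show j < p by omega), if_pos (show j - 1 < p by omega)]
    omega
  · subst h
    simp only [insA, if_pos (show j < j + 1 by omega), if_pos (show j - 1 < j + 1 by omega), lt_irrefl, if_true, if_false, and_false, false_or, or_false, and_true]
    omega
  · rcases lt_trichotomy j (p + 1) with h' | h' | h'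
    · have : j = p := by omega
      subst this
      rcases Nat.eq_zero_or_pos j with h5 | h5
      · subst h5; simp
      simp only [insA, lt_irrefl, if_true, if_false, and_false, false_or, or_false, and_true, if_pos (show j - 1 < j by omega), if_neg (show ¬ (j + 1 < j) by omega), if_neg (show ¬ (j + 1 = j) by omega), Nat.add_sub_cancel]
      omega
    · subst h'
      rw [Nat.add_sub_cancel] at h1 h3
      simp only [insA, Nat.add_sub_cancel, lt_irrefl, if_true, if_false, and_false, false_or, or_false, and_true, if_neg (show ¬ (p + 1 < p) by omega), if_neg (show ¬ (p + 1 = p) by omega), if_neg (show ¬ (p + 1 + 1 < p) by omega), if_neg (show ¬ (p + 1 + 1 = p) by omega)]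
      omega
    · simp only [insA, Nat.add_sub_cancel, if_neg (show ¬ (j < p) by omega), if_neg (show ¬ (j = p) by omega), if_neg (show ¬ (j + 1 < p) by omega), if_neg (show ¬ (j + 1 = p) by omega), if_neg (show ¬ (j - 1 < p) by omega), if_neg (show ¬ (j - 1 = p) by omega)]
      omega

lemma card_ins (n : ℕ) (A : ℕ → ℕ) (hA : ∀ j < n, A j < n) (p : ℕ) (hp : p ≤ n) :
    (pkS (n + 1) (insA p n A)).card + ((pkS n A).filter (fun j => j = p ∨ j + 1 = p)).card
      = (pkS n A).card + (if 0 < p ∧ p < n then 1 else 0) := by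
  rw [pkS_ins n A hA p hp, card_union_of_disjoint, card_union_of_disjoint, card_map]
  · have h1 := card_filter_add_card_filter_not (s := pkS n A) (fun j => j + 1 < p)
    have h2 := card_filter_add_card_filter_not (s := (pkS n A).filter (fun j => ¬ j + 1 < p)) (fun j => p < j)
    rw [filter_filter, filter_filter] at h2
    have e1 : (pkS n A).filter (fun j => ¬ j + 1 < p ∧ p < j) = (pkS n A).filter (fun j => p < j) := by
      apply filter_congr; intros; omega
    have e2 : (pkS n A).filter (fun j => ¬ j + 1 < p ∧ ¬ p < j) = (pkS n A).filter (fun j => j = p ∨ j + 1 = p) := by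
      apply filter_congr; intros; omega
    rw [e1, e2] at h2
    have e3 : (if 0 < p ∧ p < n then ({p} : Finset ℕ) else ∅).card = if 0 < p ∧ p < n then 1 else 0 := by
      split_ifs <;> simp
    rw [e3]
    omega
  · rw [disjoint_left]
    intro a ha hb
    simp only [mem_filter, mem_map, addRightEmbedding_apply] at ha hb
    obtain ⟨x, hx, rfl⟩ := hb
    omega
  · rw [disjoint_left]
    intro a ha hb
    split_ifs at hb
    · simp only [mem_union, mem_filter, mem_map, addRightEmbedding_apply, mem_singleton] at ha hb
      rcases ha with ha | ⟨x, hx, rfl⟩ <;> omega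
    · simp at hb

/-- good insertion positions -/
def good (n : ℕ) (A : ℕ → ℕ) : Finset ℕ :=
  ({0, n} ∪ pkS n A) ∪ (pkS n A).map (addRightEmbedding 1)

lemma mem_pk {n : ℕ} {A : ℕ → ℕ} {j : ℕ} (h : j ∈ pkS n A) :
    1 ≤ j ∧ j + 1 < n ∧ A (j - 1) < A j ∧ A (j + 1) < A j := by
  simp only [pkS, mem_filter] at h
  exact h.2

lemma not_adj {n : ℕ} {A : ℕ → ℕ} {j : ℕ} (h : j ∈ pkS n A) (h' : j + 1 ∈ pkS n A) : False := by
  have a := mem_pk h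
  have b := mem_pk h'
  rw [Nat.add_sub_cancel] at b
  omega

lemma card_good (n : ℕ) (hn : 1 ≤ n) (A : ℕ → ℕ) : (good n A).card = 2 + 2 * (pkS n A).card := by
  rw [good, card_union_of_disjoint, card_union_of_disjoint, card_map, card_pair (by omega)]
  · ring
  · rw [disjoint_left]
    intro a ha hb
    have := mem_pk hb
    simp at ha
    omega
  · rw [disjoint_left]
    intro a ha hb
    simp only [mem_map, addRightEmbedding_apply] at hb
    obtain ⟨x, hx, rfl⟩ := hb
    have := mem_pk hx
    simp only [mem_union, mem_insert, mem_singleton] at ha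
    rcases ha with ha | ha
    · omega
    · exact not_adj hx ha

lemma good_sub (n : ℕ) (A : ℕ → ℕ) : good n A ⊆ range (n + 1) := by
  intro a ha
  simp only [good, mem_union, mem_insert, mem_singleton, mem_map, addRightEmbedding_apply, mem_range] at ha ⊢
  rcases ha with (ha | ha) | ⟨x, hx, rfl⟩
  · omega
  · have := mem_pk ha; omega
  · have := mem_pk hx; omega

lemma card_ins_good (n : ℕ) (A : ℕ → ℕ) (hA : ∀ j < n, A j < n) (p : ℕ) (hp : p ∈ good n A) :
    (pkS (n + 1) (insA p n A)).card = (pkS n A).card := by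
  have hp' : p ≤ n := by have := good_sub n A hp; simp at this; omega
  have h := card_ins n A hA p hp'
  simp only [good, mem_union, mem_insert, mem_singleton, mem_map, addRightEmbedding_apply] at hp
  rcases hp with (hp | hp) | ⟨x, hx, rfl⟩
  · have : (pkS n A).filter (fun j => j = p ∨ j + 1 = p) = ∅ := by
      apply filter_eq_empty_iff.2
      intro x hx
      have := mem_pk hx
      omega
    rw [this, if_neg (by omega)] at h
    simpa using h
  · have : (pkS n A).filter (fun j => j = p ∨ j + 1 = p) = {p} := by
      ext x
      simp only [mem_filter, mem_singleton]
      constructor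
      · rintro ⟨hy, h' | h'⟩
        · exact h'
        · subst h'; exact (not_adj hy hp).elim
      · rintro rfl; exact ⟨hp, Or.inl rfl⟩
    have h3 := mem_pk hp
    rw [this, if_pos (by omega), card_singleton] at h
    omega
  · have : (pkS n A).filter (fun j => j = x + 1 ∨ j + 1 = x + 1) = {x} := by
      ext y
      simp only [mem_filter, mem_singleton]
      constructor
      · rintro ⟨hy, h' | h'⟩
        · subst h'; exact (not_adj hx hy).elim
        · omega
      · rintro rfl; exact ⟨hx, Or.inr rfl⟩
    have h3 := mem_pk hx
    rw [this, if_pos (by omega), card_singleton] at h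
    omega

lemma card_ins_bad (n : ℕ) (A : ℕ → ℕ) (hA : ∀ j < n, A j < n) (p : ℕ) (hpn : p ≤ n)
    (hp : p ∉ good n A) :
    (pkS (n + 1) (insA p n A)).card = (pkS n A).card + 1 := by
  have h := card_ins n A hA p hpn
  simp only [good, mem_union, mem_insert, mem_singleton, mem_map, addRightEmbedding_apply, not_or] at hp
  obtain ⟨⟨h1, h2⟩, h3⟩ := hp
  have : (pkS n A).filter (fun j => j = p ∨ j + 1 = p) = ∅ := by
    apply filter_eq_empty_iff.2
    rintro x hx (rfl | rfl)
    · exact h2 hx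
    · exact h3 ⟨x, hx, rfl⟩
  rw [this, if_pos (by omega)] at h
  simpa using h

lemma pk_le (n : ℕ) (hn : 1 ≤ n) (A : ℕ → ℕ) : 2 * (pkS n A).card + 1 ≤ n := by
  have := card_le_card (good_sub n A)
  rw [card_good n hn, card_range] at this
  omega

lemma sum_ins (n : ℕ) (hn : 1 ≤ n) (A : ℕ → ℕ) (hA : ∀ j < n, A j < n) (g : ℕ → ℂ) :
    ∑ p ∈ range (n + 1), g (pkS (n + 1) (insA p n A)).card =
      (2 + 2 * (pkS n A).card : ℕ) * g (pkS n A).card +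
        (n - 1 - 2 * (pkS n A).card : ℕ) * g ((pkS n A).card + 1) := by
  rw [← sum_sdiff (good_sub n A), add_comm]
  congr 1
  · rw [sum_congr rfl (g := fun _ => g (pkS n A).card), sum_const, card_good n hn, nsmul_eq_mul]
    intro p hp
    rw [card_ins_good n A hA p hp]
  · rw [sum_congr rfl (g := fun _ => g ((pkS n A).card + 1)), sum_const, card_sdiff_of_subset (good_sub n A),
      card_good n hn, card_range, nsmul_eq_mul]
    · congr 2; omega
    · intro p hp
      simp only [mem_sdiff, mem_range] at hp
      rw [card_ins_bad n A hA p (by omega) hp.2]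

/-- natural sequence of a permutation -/
def seq {n : ℕ} (σ : Equiv.Perm (Fin n)) : ℕ → ℕ := fun j => if h : j < n then (σ ⟨j, h⟩ : ℕ) else 0

lemma numPeaks_eq {n : ℕ} (σ : Equiv.Perm (Fin n)) : numPeaks σ = (pkS n (seq σ)).card := by
  classical
  rw [numPeaks, ← card_map Fin.valEmbedding]
  congr 1
  ext j
  simp only [mem_map, mem_filter, mem_univ, true_and, Fin.valEmbedding_apply, pkS, mem_range]
  constructor
  · rintro ⟨i, ⟨h1, h2, h3, h4⟩, rfl⟩
    have := i.isLt
    refine ⟨i.isLt, h1, h2, ?_, ?_⟩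
    · simp only [seq, dif_pos i.isLt, dif_pos (show (i : ℕ) - 1 < n by omega)]
      exact h3
    · simp only [seq, dif_pos i.isLt, dif_pos h2]
      exact h4
  · rintro ⟨h0, h1, h2, h3, h4⟩
    refine ⟨⟨j, h0⟩, ⟨h1, h2, ?_, ?_⟩, rfl⟩
    · simp only [seq, dif_pos h0, dif_pos (show j - 1 < n by omega)] at h3
      exact h3
    · simp only [seq, dif_pos h0, dif_pos h2] at h4
      exact h4

/-- insertion of the maximum at position `p` -/
def ins {n : ℕ} (x : Fin (n + 1) × Equiv.Perm (Fin n)) : Equiv.Perm (Fin (n + 1)) :=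
  (finSuccEquiv' x.1).trans ((Equiv.optionCongr x.2).trans (finSuccEquiv' (Fin.last n)).symm)

lemma ins_at {n : ℕ} (p : Fin (n + 1)) (σ : Equiv.Perm (Fin n)) : ins (p, σ) p = Fin.last n := by
  simp [ins]

lemma ins_above {n : ℕ} (p : Fin (n + 1)) (σ : Equiv.Perm (Fin n)) (i : Fin n) :
    ins (p, σ) (p.succAbove i) = (σ i).castSucc := by
  simp [ins]

lemma ins_bij (n : ℕ) : Function.Bijective (ins (n := n)) := by
  rw [Fintype.bijective_iff_injective_and_card]
  constructor
  · rintro ⟨p, σ⟩ ⟨q, τ⟩ h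
    have hpq : p = q := by
      apply (ins (q, τ)).injective
      rw [ins_at, ← h, ins_at]
    subst hpq
    congr 1
    ext i
    have h1 := ins_above p σ i
    rw [h, ins_above] at h1
    exact congrArg Fin.val (Fin.castSucc_injective _ h1.symm)
  · simp [Fintype.card_perm, Nat.factorial_succ]

lemma seq_lt {n : ℕ} (σ : Equiv.Perm (Fin n)) (j : ℕ) (hj : j < n) : seq σ j < n := by
  simp [seq, hj]

lemma pkS_congr {n : ℕ} {A B : ℕ → ℕ} (h : ∀ j < n, A j = B j) : pkS n A = pkS n B := by
  apply filter_congr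
  intro j hj
  simp only [mem_range] at hj
  have a := h j hj
  have b := h (j - 1) (by omega)
  have c := h (j + 1)
  omega

lemma seq_ins {n : ℕ} (p : Fin (n + 1)) (σ : Equiv.Perm (Fin n)) (j : ℕ) (hj : j < n + 1) :
    seq (ins (p, σ)) j = insA p n (seq σ) j := by
  simp only [seq, dif_pos hj, insA]
  split_ifs with h1 h2 h3 h4
  · have : (⟨j, hj⟩ : Fin (n + 1)) = p.succAbove ⟨j, h2⟩ := by
      rw [Fin.succAbove_of_castSucc_lt _ _ (by exact h1)]; rfl
    rw [this, ins_above]; rfl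
  · have := p.isLt; omega
  · have : (⟨j, hj⟩ : Fin (n + 1)) = p := Fin.ext h3
    rw [this, ins_at]; rfl
  · have : (⟨j, hj⟩ : Fin (n + 1)) = p.succAbove ⟨j - 1, h4⟩ := by
      rw [Fin.succAbove_of_le_castSucc _ _ (by show (p : ℕ) ≤ j - 1; omega)]
      apply Fin.ext; simp; omega
    rw [this, ins_above]; rfl
  · omega

lemma sum_perm (n : ℕ) (hn : 1 ≤ n) (g : ℕ → ℂ) :
    ∑ τ : Equiv.Perm (Fin (n + 1)), g (numPeaks τ) =
      ∑ σ : Equiv.Perm (Fin n), ((2 + 2 * numPeaks σ : ℕ) * g (numPeaks σ) +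
        (n - 1 - 2 * numPeaks σ : ℕ) * g (numPeaks σ + 1)) := by
  rw [← (ins_bij n).sum_comp, Fintype.sum_prod_type_right]
  refine sum_congr rfl fun σ _ => ?_
  rw [numPeaks_eq σ, ← sum_ins n hn (seq σ) (seq_lt σ), ← Fin.sum_univ_eq_sum_range (fun p => g (pkS (n + 1) (insA p n (seq σ))).card)]
  refine sum_congr rfl fun p _ => ?_
  rw [numPeaks_eq, pkS_congr (seq_ins p σ)]

lemma numPeaks_le {n : ℕ} (hn : 1 ≤ n) (σ : Equiv.Perm (Fin n)) : 2 * numPeaks σ + 1 ≤ n := by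
  rw [numPeaks_eq]; exact pk_le n hn _

end PkAux

namespace PkAux
open Finset Filter Topology

lemma iter_deriv_y {U : Set ℂ} (hU : IsOpen U) (y : ℂ → ℂ)
    (hy : ∀ z ∈ U, HasDerivAt y (y z ^ 2 - 2) z) (n : ℕ) (hn : 1 ≤ n) :
    ∀ z ∈ U, iteratedDeriv n y z =
      ∑ σ : Equiv.Perm (Fin n), (y z ^ 2 - 2) ^ (numPeaks σ + 1) * y z ^ (n - 1 - 2 * numPeaks σ) := by
  induction n, hn using Nat.le_induction with
  | base =>
    intro z hz
    rw [iteratedDeriv_one, (hy z hz).deriv, Fintype.sum_unique]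
    have := numPeaks_le le_rfl (default : Equiv.Perm (Fin 1))
    rw [show numPeaks (default : Equiv.Perm (Fin 1)) = 0 by omega]
    simp
  | succ n hn ih =>
    intro z hz
    rw [iteratedDeriv_succ]
    have he : iteratedDeriv n y =ᶠ[𝓝 z] fun z => ∑ σ : Equiv.Perm (Fin n),
        (y z ^ 2 - 2) ^ (numPeaks σ + 1) * y z ^ (n - 1 - 2 * numPeaks σ) := by
      filter_upwards [hU.mem_nhds hz] with x hx using ih x hx
    rw [he.deriv_eq, sum_perm n hn (fun k => (y z ^ 2 - 2) ^ (k + 1) * y z ^ (n + 1 - 1 - 2 * k))]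
    apply HasDerivAt.deriv
    apply HasDerivAt.fun_sum
    intro σ _
    have hle := numPeaks_le hn σ
    generalize numPeaks σ = k at *
    have hw : HasDerivAt (fun z => y z ^ 2 - 2) (2 * y z * (y z ^ 2 - 2)) z := by
      have := ((hy z hz).fun_pow 2).sub_const 2
      simpa using this
    have h := (hw.fun_pow (k + 1)).fun_mul ((hy z hz).fun_pow (n - 1 - 2 * k))
    refine h.congr_deriv ?_
    obtain ⟨m, rfl⟩ : ∃ m, n = m + 1 + 2 * k := ⟨n - 1 - 2 * k, by omega⟩
    rw [show m + 1 + 2 * k - 1 - 2 * k = m by omega, show m + 1 + 2 * k + 1 - 1 - 2 * k = m + 1 by omega,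
      show m + 1 + 2 * k + 1 - 1 - 2 * (k + 1) = m - 1 by omega]
    simp only [Nat.add_sub_cancel]
    push_cast
    ring

lemma f_eq {U : Set ℂ} (hU : IsOpen U) (y : ℂ → ℂ)
    (hy : ∀ z ∈ U, HasDerivAt y (y z ^ 2 - 2) z) (h0 : 0 ∈ U) (hy0 : y 0 = 1) (n : ℕ) (hn : 1 ≤ n) :
    iteratedDeriv n y 0 = - (f n : ℂ) := by
  rw [iter_deriv_y hU y hy n hn 0 h0, hy0, f, peakPoly]
  push_cast
  rw [← sum_neg_distrib]
  refine sum_congr rfl fun σ _ => ?_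
  norm_num
  rw [pow_succ]; ring

lemma iter_inv (n : ℕ) (p : ℂ) (hp : p ≠ 0) :
    iteratedDeriv n (fun z : ℂ => (z - p)⁻¹) 0 = - (n.factorial * (p⁻¹) ^ (n + 1)) := by
  have h := iter_deriv_inv_linear_sub (𝕜 := ℂ) n 1 p
  simp only [one_mul, one_pow, mul_one] at h
  rw [iteratedDeriv_eq_iterate, h]
  simp only [zero_sub]
  rw [show (-1 - n : ℤ) = -((n + 1 : ℕ) : ℤ) by push_cast; ring, zpow_neg, zpow_natCast, ← inv_pow, inv_neg,
    neg_pow (p⁻¹), pow_succ (-1 : ℂ)]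
  have : ((-1 : ℂ) ^ n) * (-1) ^ n = 1 := by rw [← mul_pow]; simp
  linear_combination (- (n.factorial : ℂ) * (p⁻¹) ^ (n + 1)) * this

lemma coeff_bound (N D : ℂ → ℂ) (hN : Differentiable ℂ N) (hD : Differentiable ℂ D) (p q : ℂ)
    (r R : ℝ) (hr : 0 < r) (hrR : r < R) (hp : p ∈ Metric.ball (0 : ℂ) R) (hq : q ∈ Metric.ball (0 : ℂ) R)
    (hpq : p ≠ q) (hp0 : p ≠ 0) (hq0 : q ≠ 0) (hDp : D p = 0) (hDq : D q = 0)
    (hp' : deriv D p = N p) (hq' : deriv D q = N q) (hNp : N p ≠ 0) (hNq : N q ≠ 0)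
    (hz : ∀ z ∈ Metric.ball (0 : ℂ) R, D z = 0 → z = p ∨ z = q) :
    ∃ C : ℝ, ∀ n : ℕ, ‖iteratedDeriv n (fun z => N z / D z) 0 +
      n.factorial * ((p⁻¹) ^ (n + 1) + (q⁻¹) ^ (n + 1))‖ ≤ n.factorial * C / r ^ n := by
  set B := Metric.ball (0 : ℂ) R with hB
  have hBo : IsOpen B := Metric.isOpen_ball
  set Q := dslope (dslope D p) q with hQ
  have hQd : Differentiable ℂ Q := by
    rw [← differentiableOn_univ, hQ, Complex.differentiableOn_dslope univ_mem,
      Complex.differentiableOn_dslope univ_mem]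
    exact hD.differentiableOn
  have fac : ∀ (F : ℂ → ℂ), F p = 0 → F q = 0 → ∀ z,
      F z = (z - p) * (z - q) * dslope (dslope F p) q z := by
    intro F h1 h2 z
    have e1 := sub_smul_dslope F p z
    have e2 := sub_smul_dslope F p q
    have e3 := sub_smul_dslope (dslope F p) q z
    rw [h1, h2, smul_eq_mul, sub_zero] at e2
    have e4 : dslope F p q = 0 := by
      rcases mul_eq_zero.1 e2 with h | h
      · exact absurd (sub_eq_zero.1 h).symm hpq
      · exact h
    rw [e4, sub_zero, smul_eq_mul] at e3
    rw [h1, sub_zero, smul_eq_mul] at e1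
    rw [← e1, ← e3]; ring
  have hDf : ∀ z, D z = (z - p) * (z - q) * Q z := fac D hDp hDq
  have hder : ∀ z, deriv D z = ((z - q) + (z - p)) * Q z + (z - p) * (z - q) * deriv Q z := by
    intro z
    have h1 : HasDerivAt (fun z => (z - p) * (z - q) * Q z)
        ((1 * (z - q) + (z - p) * 1) * Q z + (z - p) * (z - q) * deriv Q z) z :=
      (((hasDerivAt_id z).sub_const p).fun_mul ((hasDerivAt_id z).sub_const q)).fun_mul
        (hQd z).hasDerivAt
    rw [show D = fun z => (z - p) * (z - q) * Q z from funext hDf, h1.deriv]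
    ring
  have hQp : N p = (p - q) * Q p := by rw [← hp', hder]; ring
  have hQq : N q = (q - p) * Q q := by rw [← hq', hder]; ring
  have hQne : ∀ z ∈ B, Q z ≠ 0 := by
    intro z hzB h
    have : D z = 0 := by rw [hDf, h, mul_zero]
    rcases hz z hzB this with rfl | rfl
    · exact hNp (by rw [hQp, h, mul_zero])
    · exact hNq (by rw [hQq, h, mul_zero])
  set M : ℂ → ℂ := fun z => N z / Q z - (z - q) - (z - p) with hM
  have hMd : DifferentiableOn ℂ M B := by
    refine DifferentiableOn.sub (DifferentiableOn.sub ?_ ?_) ?_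
    · exact hN.differentiableOn.div hQd.differentiableOn hQne
    · fun_prop
    · fun_prop
  have hMp : M p = 0 := by
    simp only [hM]
    rw [hQp, mul_div_cancel_right₀ _ (hQne p hp)]; ring
  have hMq : M q = 0 := by
    simp only [hM]
    rw [hQq, mul_div_cancel_right₀ _ (hQne q hq)]; ring
  set T := dslope (dslope M p) q with hT
  have hTd : DifferentiableOn ℂ T B := by
    rw [hT, Complex.differentiableOn_dslope (hBo.mem_nhds hq),
      Complex.differentiableOn_dslope (hBo.mem_nhds hp)]
    exact hMd
  have hMf : ∀ z, M z = (z - p) * (z - q) * T z := fac M hMp hMq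
  have h0B : (0 : ℂ) ∈ B := by simp [hB]; linarith
  have hev : (fun z => N z / D z) =ᶠ[𝓝 0] ((fun z => (z - p)⁻¹) + (fun z => (z - q)⁻¹)) + T := by
    filter_upwards [hBo.mem_nhds h0B, isOpen_ne.mem_nhds hp0.symm, isOpen_ne.mem_nhds hq0.symm] with z h1 h2 h3
    have h2' : z - p ≠ 0 := sub_ne_zero.2 h2
    have h3' : z - q ≠ 0 := sub_ne_zero.2 h3
    have hQz := hQne z h1
    have e := hMf z
    simp only [hM] at e
    simp only [Pi.add_apply]
    have e' : T z = (N z / Q z - (z - q) - (z - p)) / ((z - p) * (z - q)) := by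
      rw [e]; field_simp
    rw [e', hDf]
    field_simp
    ring
  have hTcl : DiffContOnCl ℂ T (Metric.ball 0 r) := by
    apply DifferentiableOn.diffContOnCl
    rw [closure_ball _ hr.ne']
    exact hTd.mono (Metric.closedBall_subset_ball hrR)
  obtain ⟨C, hC⟩ := (isCompact_sphere (0 : ℂ) r).exists_bound_of_continuousOn
    (hTd.continuousOn.mono ((Metric.sphere_subset_closedBall).trans (Metric.closedBall_subset_ball hrR)))
  refine ⟨C, fun n => ?_⟩
  have hTan : ContDiffAt ℂ n T 0 := (hTd.analyticAt (hBo.mem_nhds h0B)).contDiffAt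
  have hpa : ∀ p : ℂ, p ≠ 0 → ContDiffAt ℂ n (fun z : ℂ => (z - p)⁻¹) 0 := by
    intro p hp
    exact (contDiffAt_id.sub contDiffAt_const).inv (by simpa using hp)
  rw [hev.iteratedDeriv_eq, iteratedDeriv_add (f := (fun z => (z - p)⁻¹) + (fun z => (z - q)⁻¹)) ((hpa p hp0).add (hpa q hq0)) hTan,
    iteratedDeriv_add (hpa p hp0) (hpa q hq0), iter_inv n p hp0, iter_inv n q hq0]
  have := Complex.norm_iteratedDeriv_le_of_forall_mem_sphere_norm_le n hr hTcl hC
  refine le_trans (le_of_eq ?_) this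
  congr 1
  ring

end PkAux

namespace PkAux
open Finset Filter Topology

lemma main_bound (S L : ℝ) (hS0 : 0 < S) (hS : S ^ 2 = 2) (hL0 : 0 < L) (hL : Real.exp L = 3 + 2 * S)
    (p q : ℂ) (hp : p = (L + Real.pi * Complex.I) / (2 * S)) (hq : q = (L - Real.pi * Complex.I) / (2 * S))
    (r : ℝ) (hr0 : 0 < r) (hr : (2 * S * r) ^ 2 = L ^ 2 + 4 * Real.pi ^ 2) :
    ∃ C : ℝ, ∀ n : ℕ, 1 ≤ n → ‖(f n : ℂ) +
      n.factorial * ((p⁻¹) ^ (n + 1) + (q⁻¹) ^ (n + 1))‖ ≤ n.factorial * C / r ^ n := by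
  have hpi := Real.pi_pos
  have hSC : (S : ℂ) ≠ 0 := by exact_mod_cast hS0.ne'
  have hSC2 : (S : ℂ) ^ 2 = 2 := by exact_mod_cast hS
  set K : ℂ := 3 + 2 * S with hK
  have hKL : Complex.exp L = K := by rw [← Complex.ofReal_exp, hL, hK]; push_cast; rfl
  have hK0 : K ≠ 0 := by rw [← hKL]; exact Complex.exp_ne_zero _
  set N : ℂ → ℂ := fun z => S * (Complex.exp (2 * S * z) - K) with hN
  set D : ℂ → ℂ := fun z => Complex.exp (2 * S * z) + K with hD
  have hE : ∀ z : ℂ, HasDerivAt (fun z : ℂ => Complex.exp (2 * S * z)) (Complex.exp (2 * S * z) * (2 * S)) z := by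
    intro z
    have h1 : HasDerivAt (fun z : ℂ => 2 * S * z) (2 * S) z := by
      simpa using (hasDerivAt_id z).const_mul (2 * S : ℂ)
    exact h1.cexp
  have hNd : ∀ z, HasDerivAt N (S * (Complex.exp (2 * S * z) * (2 * S))) z := fun z =>
    ((hE z).sub_const K).const_mul _
  have hDd : ∀ z, HasDerivAt D (Complex.exp (2 * S * z) * (2 * S)) z := fun z => (hE z).add_const K
  have hDz : ∀ z, D z = 0 → ∃ k : ℤ, 2 * S * z = L + (2 * k + 1) * Real.pi * Complex.I := by
    intro z hz
    have h1 : Complex.exp (2 * S * z) = Complex.exp (L + Real.pi * Complex.I) := by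
      rw [Complex.exp_add, Complex.exp_pi_mul_I, hKL]
      simp only [hD] at hz
      linear_combination hz
    obtain ⟨k, hk⟩ := Complex.exp_eq_exp_iff_exists_int.1 h1
    exact ⟨k, by rw [hk]; ring⟩
  have hEp : Complex.exp (2 * S * p) = -K := by
    rw [hp, mul_div_cancel₀ _ (by simpa using hSC), Complex.exp_add, Complex.exp_pi_mul_I, hKL]; ring
  have hEq : Complex.exp (2 * S * q) = -K := by
    rw [hq, mul_div_cancel₀ _ (by simpa using hSC), sub_eq_add_neg, Complex.exp_add, Complex.exp_neg, Complex.exp_pi_mul_I, hKL]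
    norm_num
  have nsq : ∀ (z : ℂ) (x : ℝ), 2 * S * z = L + x * Complex.I → (2 * S * ‖z‖) ^ 2 = L ^ 2 + x ^ 2 := by
    intro z x h
    have h1 : ‖2 * S * z‖ = 2 * S * ‖z‖ := by
      rw [norm_mul, norm_mul, Complex.norm_real, Real.norm_of_nonneg hS0.le]; norm_num
    rw [← h1, h, ← Complex.normSq_eq_norm_sq, Complex.normSq_apply]
    simp; ring
  set R : ℝ := Real.sqrt (L ^ 2 + 9 * Real.pi ^ 2) / (2 * S) with hR
  have hR2 : (2 * S * R) ^ 2 = L ^ 2 + 9 * Real.pi ^ 2 := by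
    rw [hR, mul_div_cancel₀ _ (by positivity), Real.sq_sqrt (by positivity)]
  have hR0 : 0 < R := by positivity
  have key : ∀ a b : ℝ, 0 ≤ b → (2 * S * a) ^ 2 < (2 * S * b) ^ 2 → a < b := by
    intro a b hb h
    have := lt_of_pow_lt_pow_left₀ 2 (by positivity) h
    exact lt_of_mul_lt_mul_left this (by positivity)
  have hps : 2 * S * p = L + Real.pi * Complex.I := by rw [hp, mul_div_cancel₀ _ (by simpa using hSC)]
  have hqs : 2 * S * q = L + (-Real.pi : ℝ) * Complex.I := by
    rw [hq, mul_div_cancel₀ _ (by simpa using hSC)]; push_cast; ring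
  have hrR : r < R := key _ _ hR0.le (by rw [hr, hR2]; nlinarith)
  have hpR : p ∈ Metric.ball (0 : ℂ) R := by
    rw [mem_ball_zero_iff]
    exact key _ _ hR0.le (by rw [nsq p _ hps, hR2]; nlinarith)
  have hqR : q ∈ Metric.ball (0 : ℂ) R := by
    rw [mem_ball_zero_iff]
    exact key _ _ hR0.le (by rw [nsq q _ hqs, hR2]; nlinarith)
  have hp0 : p ≠ 0 := by
    rintro h; have := nsq p _ hps; rw [h] at this; simp at this; nlinarith
  have hq0 : q ≠ 0 := by
    rintro h; have := nsq q _ hqs; rw [h] at this; simp at this; nlinarith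
  have hpq : p ≠ q := by
    intro h
    rw [h, hqs] at hps
    have := congrArg Complex.im hps
    simp at this
    linarith
  obtain ⟨C, hC⟩ := coeff_bound N D (fun z => (hNd z).differentiableAt) (fun z => (hDd z).differentiableAt)
    p q r R hr0 hrR hpR hqR hpq hp0 hq0 (by simp [hD, hEp]) (by simp [hD, hEq])
    (by rw [(hDd p).deriv, hEp, hN]; simp only [hEp]; ring)
    (by rw [(hDd q).deriv, hEq, hN]; simp only [hEq]; ring)
    (by simp only [hN, hEp]; refine mul_ne_zero hSC ?_
        intro h; apply hK0; linear_combination (-1/2 : ℂ) * h)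
    (by simp only [hN, hEq]; refine mul_ne_zero hSC ?_
        intro h; apply hK0; linear_combination (-1/2 : ℂ) * h)
    (by
      intro z hzB hz
      obtain ⟨k, hk⟩ := hDz z hz
      rw [mem_ball_zero_iff] at hzB
      have h1 := nsq z ((2 * k + 1) * Real.pi) (by rw [hk]; push_cast; ring)
      have h2 : (2 * S * ‖z‖) ^ 2 < (2 * S * R) ^ 2 := by gcongr
      rw [h1, hR2] at h2
      have h3 : ((2 * k + 1 : ℝ)) ^ 2 < 9 := by
        by_contra hcon
        push Not at hcon
        nlinarith [mul_le_mul_of_nonneg_right hcon (sq_nonneg Real.pi)]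
      have h4 : (2 * k + 1) ^ 2 < 9 := by exact_mod_cast h3
      have h5 : k < 1 := by nlinarith
      have h6 : -2 < k := by nlinarith
      have h7 : k = 0 ∨ k = -1 := by omega
      have h2S : (2 * S : ℂ) ≠ 0 := by simpa using hSC
      rcases h7 with rfl | rfl
      · left; apply mul_left_cancel₀ h2S; rw [hk, hps]; push_cast; ring
      · right; apply mul_left_cancel₀ h2S; rw [hk, hqs]; push_cast; ring)
  refine ⟨C, fun n hn => ?_⟩
  have hfe := f_eq (U := {z | D z ≠ 0}) (isOpen_ne_fun
      (continuous_iff_continuousAt.2 fun z => (hDd z).continuousAt) continuous_const)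
      (fun z => -(N z / D z)) (by
        intro z hz
        refine (((hNd z).fun_div (hDd z) hz).fun_neg).congr_deriv ?_
        have hz' : Complex.exp (2 * S * z) + K ≠ 0 := hz
        simp only [hN, hD]
        generalize Complex.exp (2 * S * z) = e at hz' ⊢
        field_simp
        linear_combination (-(e + K) ^ 2) * hSC2)
      (by
        simp only [Set.mem_setOf_eq, hD, mul_zero, Complex.exp_zero, hK]
        norm_cast; positivity)
      (by
        simp only [hN, hD, mul_zero, Complex.exp_zero, hK]
        have : (1 + (3 + 2 * S) : ℂ) ≠ 0 := by norm_cast; positivity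
        rw [← neg_div, div_eq_one_iff_eq this]
        linear_combination 2 * hSC2) n hn
  have hng : iteratedDeriv n (fun z => -(N z / D z)) 0 = - iteratedDeriv n (fun z => N z / D z) 0 := by
    exact iteratedDeriv_fun_neg n _ _
  rw [hng, neg_inj] at hfe
  rw [← hfe]
  exact hC n

end PkAux

open Filter in
/-- There is `α` with `0 < α < 1/ρ` such that
`fₙ = -2 ρ^{-(n+1)} cos((n+1)θ) · n! + O(αⁿ · n!)` as `n → ∞`, where
`ρ = √((log(3+2√2))² + π²)/(2√2)` and `θ = arctan(π / log(3+2√2))`. -/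
theorem f_asymptotics :
    ∃ α : ℝ, 0 < α ∧
      α < 1 / (Real.sqrt (Real.log (3 + 2 * Real.sqrt 2) ^ 2 + Real.pi ^ 2) /
        (2 * Real.sqrt 2)) ∧
      (fun n : ℕ => f n -
          (-2 * (Real.sqrt (Real.log (3 + 2 * Real.sqrt 2) ^ 2 + Real.pi ^ 2) /
              (2 * Real.sqrt 2)) ^ (-((n : ℤ) + 1)) *
            Real.cos ((n + 1) * Real.arctan (Real.pi / Real.log (3 + 2 * Real.sqrt 2))) *
            (n.factorial : ℝ)))
        =O[atTop] fun n : ℕ => α ^ n * (n.factorial : ℝ) := by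
  set S := Real.sqrt 2 with hSdef
  have hS0 : 0 < S := by positivity
  have hS : S ^ 2 = 2 := Real.sq_sqrt (by norm_num)
  set L := Real.log (3 + 2 * S) with hLdef
  have hL0 : 0 < L := Real.log_pos (by linarith)
  have hL : Real.exp L = 3 + 2 * S := Real.exp_log (by positivity)
  have hpi := Real.pi_pos
  set ρ := Real.sqrt (L ^ 2 + Real.pi ^ 2) / (2 * S) with hρ
  have hρ0 : 0 < ρ := by positivity
  set r := Real.sqrt (L ^ 2 + 4 * Real.pi ^ 2) / (2 * S) with hrdef
  have hr0 : 0 < r := by positivity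
  have hr : (2 * S * r) ^ 2 = L ^ 2 + 4 * Real.pi ^ 2 := by
    rw [hrdef, mul_div_cancel₀ _ (by positivity), Real.sq_sqrt (by positivity)]
  have hρr : ρ < r := by
    rw [hρ, hrdef]
    apply div_lt_div_of_pos_right _ (by positivity)
    apply Real.sqrt_lt_sqrt (by positivity)
    nlinarith
  set θ := Real.arctan (Real.pi / L) with hθ
  have hsq : Real.sqrt (1 + (Real.pi / L) ^ 2) = 2 * S * ρ / L := by
    rw [hρ, mul_div_cancel₀ _ (by positivity), eq_div_iff hL0.ne']
    nth_rewrite 2 [← Real.sqrt_sq hL0.le]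
    rw [← Real.sqrt_mul (by positivity)]
    congr 1
    field_simp
  have hcos : ρ * Real.cos θ = L / (2 * S) := by
    rw [hθ, Real.cos_arctan, hsq]; field_simp
  have hsin : ρ * Real.sin θ = Real.pi / (2 * S) := by
    rw [hθ, Real.sin_arctan, hsq]; field_simp
  have hSC : (S : ℂ) ≠ 0 := by exact_mod_cast hS0.ne'
  have hcosC : (ρ : ℂ) * Complex.cos θ = L / (2 * S) := by exact_mod_cast hcos
  have hsinC : (ρ : ℂ) * Complex.sin θ = Real.pi / (2 * S) := by exact_mod_cast hsin
  obtain ⟨C, hC⟩ := PkAux.main_bound S L hS0 hS hL0 hL (ρ * Complex.exp (θ * Complex.I))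
    (ρ * Complex.exp (-θ * Complex.I))
    (by rw [Complex.exp_mul_I, mul_add, hcosC, ← mul_assoc, hsinC]; ring)
    (by rw [Complex.exp_mul_I, Complex.cos_neg, Complex.sin_neg, mul_add, hcosC, neg_mul, mul_neg, ← mul_assoc, hsinC]; ring)
    r hr0 hr
  refine ⟨1 / r, by positivity, one_div_lt_one_div_of_lt hρ0 hρr, ?_⟩
  refine Asymptotics.IsBigO.of_bound C ?_
  filter_upwards [eventually_ge_atTop 1] with n hn
  have h := hC n hn
  have e : ((ρ * Complex.exp (θ * Complex.I))⁻¹) ^ (n + 1) + ((ρ * Complex.exp (-θ * Complex.I))⁻¹) ^ (n + 1)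
      = ((2 * ρ ^ (-((n : ℤ) + 1)) * Real.cos ((n + 1) * θ) : ℝ) : ℂ) := by
    rw [mul_inv, mul_inv, ← Complex.exp_neg, ← Complex.exp_neg, mul_pow, mul_pow, ← Complex.exp_nat_mul,
      ← Complex.exp_nat_mul, show (-((n : ℤ) + 1)) = -((n + 1 : ℕ) : ℤ) by push_cast; ring, zpow_neg, zpow_natCast]
    push_cast
    rw [Complex.cos, inv_pow]
    rw [show ((n : ℂ) + 1) * -(θ * Complex.I) = -((n + 1) * θ) * Complex.I by ring,
      show ((n : ℂ) + 1) * -(-θ * Complex.I) = (n + 1) * θ * Complex.I by ring]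
    ring
  rw [e, ← Complex.ofReal_natCast, ← Complex.ofReal_mul, ← Complex.ofReal_add, Complex.norm_real] at h
  rw [Real.norm_of_nonneg (show 0 ≤ (1 / r) ^ n * (n.factorial : ℝ) by positivity)]
  refine le_trans (le_of_eq ?_) (h.trans (le_of_eq ?_))
  · congr 1; ring
  · rw [one_div, inv_pow]; ring
end

section
/- The set of natural numbers n for which fₙ and −cos((n+1)θ) do not have the same sign has natural density zero; that is, (1/N)·#{n ≤ N : sign(fₙ) ≠ sign(−cos((n+1)θ))} → 0 as N → ∞. -/
namespace PeakAux
open Filter Topology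

lemma factor_one {H : ℂ → ℂ} (hH : Differentiable ℂ H) (c : ℂ) (n : ℕ)
    (h : (n : ℕ∞) ≤ analyticOrderAt H c) :
    ∃ G : ℂ → ℂ, Differentiable ℂ G ∧ ∀ z, H z = (z - c) ^ n * G z := by
  classical
  obtain ⟨g, hg, hgz⟩ := (natCast_le_analyticOrderAt (hH.analyticAt c)).1 h
  refine ⟨Function.update (fun z => H z / (z - c) ^ n) c (g c), ?_, ?_⟩
  · intro z
    by_cases hz : z = c
    · subst hz
      refine hg.differentiableAt.congr_of_eventuallyEq ?_
      filter_upwards [hgz] with w hw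
      by_cases hwz : w = z
      · subst hwz; simp
      · have : (w - z) ^ n ≠ 0 := pow_ne_zero _ (sub_ne_zero.2 hwz)
        rw [Function.update_of_ne hwz, hw, smul_eq_mul, mul_div_cancel_left₀ _ this]
    · have h1 : DifferentiableAt ℂ (fun z => H z / (z - c) ^ n) z := by
        refine (hH z).div (by fun_prop) (pow_ne_zero _ (sub_ne_zero.2 hz))
      refine h1.congr_of_eventuallyEq ?_
      filter_upwards [isOpen_ne.mem_nhds hz] with w hw
      exact Function.update_of_ne hw _ _
  · intro z
    by_cases hz : z = c
    · subst hz
      have := hgz.self_of_nhds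
      simpa using this
    · have : (z - c) ^ n ≠ 0 := pow_ne_zero _ (sub_ne_zero.2 hz)
      rw [Function.update_of_ne hz, mul_div_cancel₀ _ this]

lemma factor_many {F : ℂ → ℂ} (hF : Differentiable ℂ F) (r m : ℕ)
    (h : ∀ l < m, (r : ℕ∞) ≤ analyticOrderAt F (l : ℂ)) :
    ∃ G : ℂ → ℂ, Differentiable ℂ G ∧
      ∀ z, F z = (∏ l ∈ Finset.range m, (z - (l : ℂ)) ^ r) * G z := by
  induction m with
  | zero => exact ⟨F, hF, by simp⟩
  | succ m ih =>
    obtain ⟨G, hG, hFG⟩ := ih (fun l hl => h l (by omega))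
    have hpd : Differentiable ℂ (fun z : ℂ => ∏ l ∈ Finset.range m, (z - (l : ℂ)) ^ r) := by
      fun_prop
    have ho : (r : ℕ∞) ≤ analyticOrderAt G (m : ℂ) := by
      have h1 := h m (by omega)
      have h2 : F = (fun z : ℂ => ∏ l ∈ Finset.range m, (z - (l : ℂ)) ^ r) * G := by
        ext z; simp [hFG z]
      rw [h2, analyticOrderAt_mul (hpd.analyticAt _) (hG.analyticAt _)] at h1
      have h3 : analyticOrderAt (fun z : ℂ => ∏ l ∈ Finset.range m, (z - (l : ℂ)) ^ r) (m : ℂ) = 0 := by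
        rw [(hpd.analyticAt _).analyticOrderAt_eq_zero]
        refine Finset.prod_ne_zero_iff.2 fun l hl => pow_ne_zero _ (sub_ne_zero.2 ?_)
        have := Finset.mem_range.1 hl
        exact_mod_cast (by omega : m ≠ l)
      rwa [h3, zero_add] at h1
    obtain ⟨G', hG', hGG⟩ := factor_one hG _ r ho
    refine ⟨G', hG', fun z => ?_⟩
    rw [hFG, hGG, Finset.prod_range_succ]; ring

lemma iteratedDeriv_factor {F Q : ℂ → ℂ} (hQ : Differentiable ℂ Q) (c : ℂ) (r : ℕ)
    (h : ∀ z, F z = (z - c) ^ r * Q z) : iteratedDeriv r F c = r.factorial * Q c := by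
  have hd : Differentiable ℂ (dslope Q c) := by
    rw [← differentiableOn_univ] at hQ ⊢
    exact (Complex.differentiableOn_dslope (by simp)).2 hQ
  have h1 : F = (fun z => Q c * (z - c) ^ r) + (fun z => (z - c) ^ (r + 1) * dslope Q c z) := by
    ext z
    have := sub_smul_dslope Q c z
    simp only [Pi.add_apply, h z]
    rw [smul_eq_mul] at this
    linear_combination -(z-c)^r * this
  have hd1 : ContDiff ℂ (r : WithTop ℕ∞) (fun z : ℂ => Q c * (z - c) ^ r) := by fun_prop
  have hd2' : Differentiable ℂ (fun z : ℂ => (z - c) ^ (r + 1) * dslope Q c z) := by fun_prop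
  have hd2 : ContDiff ℂ (r : WithTop ℕ∞) (fun z : ℂ => (z - c) ^ (r + 1) * dslope Q c z) :=
    hd2'.contDiff
  rw [h1, iteratedDeriv_add hd1.contDiffAt hd2.contDiffAt]
  have h2 : iteratedDeriv r (fun z => (z - c) ^ (r + 1) * dslope Q c z) c = 0 := by
    refine (natCast_le_analyticOrderAt_iff_iteratedDeriv_eq_zero (n := r + 1)
      (hd2'.analyticAt c)).1 ?_ r (by omega)
    rw [natCast_le_analyticOrderAt (hd2'.analyticAt c)]
    exact ⟨dslope Q c, hd.analyticAt c, by simp⟩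
  rw [h2, add_zero, iteratedDeriv_const_mul_field]
  have h3 := congrFun (iteratedDeriv_comp_sub_const r (fun y : ℂ => y ^ r) c) c
  rw [h3]
  simp [iteratedDeriv_eq_iterate, Nat.descFactorial_self, mul_comm]

lemma analytic_bound {F : ℂ → ℂ} (hF : Differentiable ℂ F) (m r l0 : ℕ) (hl0 : l0 < m)
    (hz : ∀ l < m, ∀ a < r, iteratedDeriv a F (l : ℂ) = 0) (R B : ℝ) (hR : m < R)
    (hB : ∀ z : ℂ, ‖z‖ = R → ‖F z‖ ≤ B) :
    ‖iteratedDeriv r F (l0 : ℂ)‖ ≤ r.factorial * (m : ℝ) ^ (m * r) * (B / (R - m) ^ (m * r)) := by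
  have hRm : 0 < R - m := by linarith
  obtain ⟨G, hG, hFG⟩ := factor_many hF r m (fun l hl =>
    (natCast_le_analyticOrderAt_iff_iteratedDeriv_eq_zero (hF.analyticAt _)).2 (hz l hl))
  have hGb : ‖G l0‖ ≤ B / (R - m) ^ (m * r) := by
    refine Complex.norm_le_of_forall_mem_frontier_norm_le (U := Metric.ball 0 R)
      Metric.isBounded_ball hG.diffContOnCl ?_ ?_
    · intro z hz'
      rw [frontier_ball _ (by linarith [(Nat.cast_nonneg m : (0:ℝ) ≤ m)]), mem_sphere_zero_iff_norm] at hz'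
      have h1 := hB z hz'
      rw [hFG, norm_mul, norm_prod] at h1
      have h2 : (R - m) ^ (m * r) ≤ ∏ l ∈ Finset.range m, ‖(z - (l : ℂ)) ^ r‖ := by
        have : (R - m) ^ (m * r) = ∏ l ∈ Finset.range m, (R - m) ^ r := by
          rw [Finset.prod_const, Finset.card_range, ← pow_mul, mul_comm]
        rw [this]
        refine Finset.prod_le_prod (fun _ _ => by positivity) fun l hl => ?_
        rw [norm_pow]
        refine pow_le_pow_left₀ hRm.le ?_ _
        have h3 := norm_sub_norm_le z (l : ℂ)
        have h4 : (l : ℝ) ≤ m := by exact_mod_cast (Finset.mem_range.1 hl).le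
        rw [hz', Complex.norm_natCast] at h3
        linarith
      rw [le_div_iff₀ (by positivity), mul_comm]
      exact (mul_le_mul_of_nonneg_right h2 (norm_nonneg _)).trans h1
    · apply subset_closure
      rw [mem_ball_zero_iff, Complex.norm_natCast]
      have : (l0 : ℝ) < m := by exact_mod_cast hl0
      linarith
  have hQ : Differentiable ℂ fun z =>
      (∏ l ∈ (Finset.range m).erase l0, (z - (l : ℂ)) ^ r) * G z := by fun_prop
  rw [iteratedDeriv_factor hQ (l0 : ℂ) r (fun z => by
    rw [hFG, ← Finset.mul_prod_erase _ _ (Finset.mem_range.2 hl0), mul_assoc])]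
  rw [norm_mul, norm_mul, norm_prod, Complex.norm_natCast, mul_assoc]
  have h5 : ∏ l ∈ (Finset.range m).erase l0, ‖((l0 : ℂ) - (l : ℂ)) ^ r‖ ≤ (m : ℝ) ^ (m * r) := by
    have hm1 : (1 : ℝ) ≤ m := by exact_mod_cast (by omega : 1 ≤ m)
    calc _ ≤ ∏ l ∈ (Finset.range m).erase l0, (m : ℝ) ^ r := by
          refine Finset.prod_le_prod (fun _ _ => norm_nonneg _) fun l hl => ?_
          rw [norm_pow]
          refine pow_le_pow_left₀ (norm_nonneg _) ?_ _
          have hl' := Finset.mem_range.1 (Finset.mem_of_mem_erase hl)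
          have : ((l0 : ℂ) - (l : ℂ)) = (((l0 : ℤ) - (l : ℤ) : ℤ) : ℂ) := by push_cast; ring
          rw [this, Complex.norm_intCast]
          have : |(l0 : ℤ) - l| ≤ m := by rw [abs_le]; omega
          exact_mod_cast this
      _ ≤ (m : ℝ) ^ (m * r) := by
          rw [Finset.prod_const, ← pow_mul]
          refine pow_le_pow_right₀ hm1 ?_
          rw [mul_comm]
          refine Nat.mul_le_mul_right _ ?_
          simpa using Finset.card_le_card (Finset.erase_subset l0 (Finset.range m))
  gcongr

end PeakAux

namespace PeakAux
open Filter Topology NumberField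

lemma final_arith (h r : ℕ) (hh : 1 ≤ h) (hr : 1 ≤ r) (x y C5 C6 : ℝ) (hx0 : 0 ≤ x) (hy0 : 0 ≤ y)
    (h5 : 0 ≤ C5) (h6 : 0 ≤ C6) (hy : y ≤ (C5 * r) ^ r)
    (hx : x ^ 2 * (r : ℝ) ^ ((2 * h + 2) * r) ≤ C6 ^ r * (r : ℝ) ^ (3 * r))
    (h1 : 1 ≤ x * y ^ (h - 1)) : (r : ℝ) ≤ C6 * C5 ^ (2 * (h - 1)) := by
  obtain ⟨k, rfl⟩ : ∃ k, h = k + 1 := ⟨h - 1, by omega⟩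
  simp only [Nat.add_sub_cancel] at *
  have hr0 : (0 : ℝ) < r := by exact_mod_cast hr
  have h2 : 1 ≤ x ^ 2 * y ^ (2 * k) := by
    have := one_le_pow₀ h1 (n := 2)
    calc (1:ℝ) ≤ _ := this
      _ = _ := by ring
  have h3 : (r : ℝ) ^ ((2 * (k + 1) + 2) * r) ≤
      C6 ^ r * (r : ℝ) ^ (3 * r) * ((C5 * r) ^ r) ^ (2 * k) := by
    calc (r : ℝ) ^ ((2 * (k + 1) + 2) * r) ≤ (r : ℝ) ^ ((2 * (k + 1) + 2) * r) * (x ^ 2 * y ^ (2 * k)) :=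
          le_mul_of_one_le_right (by positivity) h2
      _ = (x ^ 2 * (r : ℝ) ^ ((2 * (k + 1) + 2) * r)) * y ^ (2 * k) := by ring
      _ ≤ _ := by gcongr
  have h4 : (r : ℝ) ^ r * (r : ℝ) ^ ((2 * k + 3) * r) ≤
      (C6 * C5 ^ (2 * k)) ^ r * (r : ℝ) ^ ((2 * k + 3) * r) := by
    calc _ = (r : ℝ) ^ ((2 * (k + 1) + 2) * r) := by rw [← pow_add]; congr 1; ring
      _ ≤ _ := h3
      _ = _ := by
        rw [mul_pow, mul_pow, mul_pow, ← pow_mul, ← pow_mul, ← pow_mul]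
        have : (2 * k + 3) * r = 3 * r + r * (2 * k) := by ring
        rw [this, pow_add]; ring_nf
  have h5' := le_of_mul_le_mul_right h4 (by positivity)
  exact le_of_pow_le_pow_left₀ (by omega) (by positivity) h5'

variable {K : Type*} [Field K] [NumberField K]

lemma siegel_const (K : Type*) [Field K] [NumberField K] : ∃ C : ℝ, 1 ≤ C ∧ ∀ (q m n : ℕ) (a : Matrix (Fin n × Fin m) (Fin q × Fin q) (𝓞 K)),
    a ≠ 0 → 0 < n * m → q * q = 2 * (n * m) → ∀ A : ℝ,
    (∀ k l, house ((a k l : 𝓞 K) : K) ≤ A) →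
    ∃ ξ : Fin q × Fin q → 𝓞 K, ξ ≠ 0 ∧ a.mulVec ξ = 0 ∧
      ∀ l, house ((ξ l : 𝓞 K) : K) ≤ C * (q ^ 2 * A) := by
  classical
  have key : ∃ c : ℝ, ∀ (q m n : ℕ) (a : Matrix (Fin n × Fin m) (Fin q × Fin q) (𝓞 K)),
    a ≠ 0 → 0 < n * m → n * m < q * q → ∀ A : ℝ,
    (∀ k l, house ((a k l : 𝓞 K) : K) ≤ A) →
    ∃ ξ : Fin q × Fin q → 𝓞 K, ξ ≠ 0 ∧ a.mulVec ξ = 0 ∧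
      ∀ l, house ((ξ l : 𝓞 K) : K) ≤ c * (c * (q * q : ℕ) * A) ^ (((n * m : ℕ) : ℝ) / ((q * q : ℕ) - (n * m : ℕ))) := by
    exact ⟨_, fun q m n a ha h1 h2 A hA =>
      NumberField.house.exists_ne_zero_int_vec_house_le K a ha h1 h2 (by simp) hA (by simp)⟩
  obtain ⟨c, hc⟩ := key
  refine ⟨max 1 (|c| * |c|), le_max_left _ _, fun q m n a ha h1 h2 A hA => ?_⟩
  obtain ⟨ξ, h3, h4, h5⟩ := hc q m n a ha h1 (by omega) A hA
  refine ⟨ξ, h3, h4, fun l => (h5 l).trans ?_⟩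
  have hA0 : 0 ≤ A := by
    have hn : 0 < n := Nat.pos_of_mul_pos_right h1
    have hm : 0 < m := Nat.pos_of_mul_pos_left h1
    exact (house_nonneg _).trans (hA (⟨0, hn⟩, ⟨0, hm⟩) l)
  have he : (((n * m : ℕ) : ℝ) / ((q * q : ℕ) - (n * m : ℕ))) = 1 := by
    rw [h2]; push_cast
    have : (0:ℝ) < (n : ℝ) * m := by exact_mod_cast h1
    rw [div_eq_one_iff_eq] <;> nlinarith
  rw [he, Real.rpow_one]
  calc c * (c * (q * q : ℕ) * A) = (c * c) * (q ^ 2 * A) := by push_cast; ring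
    _ ≤ _ := by
      gcongr
      rw [← abs_mul]; exact (le_abs_self _).trans (le_max_right _ _)

/-- the exponents -/
def lam (d : ℕ) (b : 𝓞 K) (j k : ℕ) : 𝓞 K := d * j + k * b

lemma house_lam (d : ℕ) (b : 𝓞 K) (q j k : ℕ) (hj : j < q) (hk : k < q) :
    house ((lam d b j k : 𝓞 K) : K) ≤ (d + house (b : K) + 1) * q := by
  have h0 := house_nonneg (b : K)
  have h1 : house ((lam d b j k : 𝓞 K) : K) ≤ (d * j : ℕ) + k * house (b : K) := by
    simp only [lam, map_add, map_mul, map_natCast]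
    refine (house_add_le _ _).trans ?_
    rw [house_nat_mul (b : K) k]
    have : house ((d : K) * j) = (d * j : ℕ) := by
      have := house_intCast (K := K) (d * j)
      push_cast at this ⊢
      rw [this, abs_of_nonneg (by positivity)]
    rw [this]
  refine h1.trans ?_
  have hj' : (j : ℝ) ≤ q := by exact_mod_cast hj.le
  have hk' : (k : ℝ) ≤ q := by exact_mod_cast hk.le
  push_cast
  have hd : (0:ℝ) ≤ d := by positivity
  nlinarith [mul_le_mul_of_nonneg_left hj' hd, mul_le_mul_of_nonneg_right hk' h0]

/-- the linear forms -/
def lform (d : ℕ) (b g : 𝓞 K) {q : ℕ} (η : Fin q × Fin q → 𝓞 K) (a l : ℕ) : 𝓞 K :=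
  ∑ x : Fin q × Fin q, η x * (lam d b x.1 x.2 ^ a * g ^ ((x.2 : ℕ) * l))

lemma house_entry (d : ℕ) (b g : 𝓞 K) (q m j k a n l : ℕ) (hj : j < q) (hk : k < q) (ha : a ≤ n)
    (hl : l ≤ m) (hqn : q ≤ n) :
    house ((lam d b j k ^ a * g ^ (k * l) : 𝓞 K) : K) ≤
      ((d + house (b : K) + 1) * (house (g : K) + 1) ^ m * q) ^ n := by
  have h0 := house_nonneg (b : K)
  have hg0 := house_nonneg (g : K)
  have hq1 : (1 : ℝ) ≤ q := by exact_mod_cast (by omega : 1 ≤ q)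
  have hd : (0:ℝ) ≤ d := by positivity
  have hC : (1 : ℝ) ≤ (d + house (b : K) + 1) := by linarith
  have h1 : house ((lam d b j k ^ a * g ^ (k * l) : 𝓞 K) : K) ≤
      house ((lam d b j k : 𝓞 K) : K) ^ a * house (g : K) ^ (k * l) := by
    simp only [map_mul, map_pow]
    refine (house_mul_le _ _).trans ?_
    exact mul_le_mul (house_pow_le _ _) (house_pow_le _ _) (house_nonneg _)
      (pow_nonneg (house_nonneg _) _)
  refine h1.trans ?_
  calc _ ≤ ((d + house (b : K) + 1) * q) ^ a * (house (g : K) + 1) ^ (k * l) := by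
        gcongr
        · exact house_nonneg _
        · exact house_lam d b q j k hj hk
        · linarith
    _ ≤ ((d + house (b : K) + 1) * q) ^ n * (house (g : K) + 1) ^ (m * n) := by
        refine mul_le_mul (pow_le_pow_right₀ (by nlinarith) ha)
          (pow_le_pow_right₀ (by linarith) ?_) (by positivity) (by positivity)
        calc k * l ≤ n * m := Nat.mul_le_mul (by omega) hl
          _ = m * n := mul_comm _ _
    _ = _ := by rw [pow_mul, ← mul_pow]; congr 1; ring

lemma siegel_step (d : ℕ) (b g : 𝓞 K) (m : ℕ) (hm : 1 ≤ m) : ∃ C : ℝ, 1 ≤ C ∧ ∀ t : ℕ, 1 ≤ t →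
    ∃ η : Fin (2 * m * t) × Fin (2 * m * t) → 𝓞 K, η ≠ 0 ∧
      (∀ a < 2 * m * t ^ 2, ∀ l < m, lform d b g η a l = 0) ∧
      ∀ x, house ((η x : 𝓞 K) : K) ≤ (C * (2 * m * t : ℕ)) ^ (2 * m * t ^ 2) := by
  obtain ⟨C, hC, hS⟩ := siegel_const K
  set C1 : ℝ := (d + house (b : K) + 1) * (house (g : K) + 1) ^ m with hC1
  have h0 := house_nonneg (b : K)
  have hg0 := house_nonneg (g : K)
  have hd : (0:ℝ) ≤ d := by positivity
  have hC11 : 1 ≤ C1 := by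
    rw [hC1]; exact one_le_mul_of_one_le_of_one_le (by linarith) (one_le_pow₀ (by linarith))
  have hm1 : (1 : ℝ) ≤ m := by exact_mod_cast hm
  refine ⟨C * (4 * m) * C1, one_le_mul_of_one_le_of_one_le (one_le_mul_of_one_le_of_one_le hC (by linarith)) hC11, fun t ht => ?_⟩
  set q := 2 * m * t with hq
  set n := 2 * m * t ^ 2 with hn
  have hn1 : 1 ≤ n := by rw [hn]; exact Nat.one_le_iff_ne_zero.2 (by positivity)
  have hq1 : 1 ≤ q := by rw [hq]; exact Nat.one_le_iff_ne_zero.2 (by positivity)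
  have hqn : q ≤ n := by
    rw [hq, hn]; exact Nat.mul_le_mul_left _ (by nlinarith)
  have hqq : q * q = 2 * (n * m) := by rw [hq, hn]; ring
  obtain ⟨ξ, h1, h2, h3⟩ := hS q m n (Matrix.of fun y x => lam d b x.1 x.2 ^ (y.1 : ℕ) * g ^ ((x.2 : ℕ) * (y.2 : ℕ)))
    (fun h => by
      have := congrFun (congrFun h (⟨0, hn1⟩, ⟨0, hm⟩)) (⟨0, hq1⟩, ⟨0, hq1⟩)
      simp at this) (by positivity) hqq ((C1 * q) ^ n)
    (fun y x => house_entry d b g q m _ _ _ n _ x.1.2 x.2.2 y.1.2.le y.2.2.le hqn)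
  refine ⟨ξ, h1, fun a ha l hl => ?_, fun x => (h3 x).trans ?_⟩
  · have := congrFun h2 (⟨a, ha⟩, ⟨l, hl⟩)
    simp only [Matrix.mulVec, dotProduct, Matrix.of_apply, Pi.zero_apply] at this
    rw [lform, ← this]
    exact Finset.sum_congr rfl fun _ _ => mul_comm _ _
  · have hq2 : (q : ℝ) ^ 2 = 2 * n * m := by rw [sq]; exact_mod_cast hqq.trans (by ring)
    have h4 : (q : ℝ) ^ 2 ≤ (4 * m) ^ n := by
      have h5 : (n : ℝ) ≤ 2 ^ n := by exact_mod_cast Nat.lt_two_pow_self.le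
      have h6 : (2 * m : ℝ) ≤ (2 * m) ^ n := le_self_pow₀ (by linarith) (by omega)
      calc (q : ℝ) ^ 2 = n * (2 * m) := by rw [hq2]; ring
        _ ≤ 2 ^ n * (2 * m) ^ n := by gcongr
        _ = _ := by rw [← mul_pow]; ring
    have h7 : C ≤ C ^ n := le_self_pow₀ hC (by omega)
    calc C * (q ^ 2 * (C1 * q) ^ n) ≤ C ^ n * ((4 * m) ^ n * (C1 * q) ^ n) := by gcongr
      _ = _ := by rw [← mul_pow, ← mul_pow]; congr 1; ring

end PeakAux

namespace PeakAux
open Filter Topology NumberField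

variable {K : Type*} [Field K] [NumberField K]

lemma exists_lform_ne (d : ℕ) (b g : 𝓞 K) {q : ℕ} (η : Fin q × Fin q → 𝓞 K) (hη : η ≠ 0)
    (hinj : ∀ j k j' k' : ℕ, lam d b j k = lam d b j' k' → j = j' ∧ k = k') :
    ∃ r, lform d b g η r 0 ≠ 0 := by
  by_contra hcon
  push Not at hcon
  apply hη
  have h1 : (fun i : Fin (q * q) => η (finProdFinEquiv.symm i)) = 0 := by
    refine Matrix.eq_zero_of_forall_pow_sum_mul_pow_eq_zero
      (f := fun i : Fin (q * q) => lam d b (finProdFinEquiv.symm i).1 (finProdFinEquiv.symm i).2) ?_ ?_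
    · intro i i' h
      have := hinj _ _ _ _ h
      apply finProdFinEquiv.symm.injective
      exact Prod.ext (Fin.ext this.1) (Fin.ext this.2)
    · intro a
      have := hcon a
      rw [lform] at this
      rw [← this]
      refine Fintype.sum_equiv finProdFinEquiv.symm _ _ fun i => ?_
      simp
  ext x
  have := congrFun h1 (finProdFinEquiv x)
  simp only [Equiv.symm_apply_apply, Pi.zero_apply] at this
  simp [this]

/-- the auxiliary function -/
noncomputable def auxF (σ : K →+* ℂ) (d : ℕ) (b : 𝓞 K) (w : ℂ) {q : ℕ}
    (η : Fin q × Fin q → 𝓞 K) (z : ℂ) : ℂ :=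
  ∑ x : Fin q × Fin q, σ (η x : K) * Complex.exp ((σ (lam d b x.1 x.2 : K) * w) * z)

lemma auxF_diff (σ : K →+* ℂ) (d : ℕ) (b : 𝓞 K) (w : ℂ) {q : ℕ}
    (η : Fin q × Fin q → 𝓞 K) : Differentiable ℂ (auxF σ d b w η) := by
  unfold auxF; fun_prop

lemma auxF_deriv (σ : K →+* ℂ) (d : ℕ) (b g : 𝓞 K) (w : ℂ)
    (h1 : Complex.exp (d * w) = 1) (h2 : Complex.exp (σ (b : K) * w) = σ (g : K)) {q : ℕ}
    (η : Fin q × Fin q → 𝓞 K) (a l : ℕ) :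
    iteratedDeriv a (auxF σ d b w η) l = w ^ a * σ (lform d b g η a l : K) := by
  unfold auxF
  rw [iteratedDeriv_fun_sum (fun i _ => by fun_prop)]
  simp only [lform, map_sum, Finset.mul_sum]
  refine Finset.sum_congr rfl fun x _ => ?_
  rw [iteratedDeriv_const_mul_field, iteratedDeriv_cexp_const_mul]
  have : Complex.exp (σ (lam d b x.1 x.2 : K) * w * l) = σ (g : K) ^ ((x.2 : ℕ) * l) := by
    have e1 : σ (lam d b x.1 x.2 : K) * w * l =
        ((x.1 * l : ℕ) : ℂ) * (d * w) + ((x.2 * l : ℕ) : ℂ) * (σ (b : K) * w) := by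
      simp only [lam, map_add, map_mul, map_natCast]; push_cast; ring
    rw [e1, Complex.exp_add, Complex.exp_nat_mul (d * w), Complex.exp_nat_mul (σ (b : K) * w), h1, h2,
      one_pow, one_mul]
  simp only [map_mul, map_pow, this]
  ring

lemma house_lform (d : ℕ) (b g : 𝓞 K) {q : ℕ} (η : Fin q × Fin q → 𝓞 K) (m n r l : ℕ) (D : ℝ)
    (hD : ∀ x, house (η x : K) ≤ D) (hD0 : 0 ≤ D) (hl : l < m) (hnr : n ≤ r) (hqn : q ≤ n) :
    house (lform d b g η r l : K) ≤ q ^ 2 * (D *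
      ((d + house (b : K) + 1) * (house (g : K) + 1) ^ m * q) ^ r) := by
  have h1 : ((lform d b g η r l : 𝓞 K) : K) = ∑ x : Fin q × Fin q,
      ((η x : 𝓞 K) : K) * ((lam d b x.1 x.2 ^ r * g ^ ((x.2 : ℕ) * l) : 𝓞 K) : K) := by
    simp only [lform, map_sum, map_mul]
  rw [h1]
  refine (house_sum_le_sum_house _ _).trans ?_
  calc _ ≤ ∑ x : Fin q × Fin q, (D *
      ((d + house (b : K) + 1) * (house (g : K) + 1) ^ m * q) ^ r) := by
        refine Finset.sum_le_sum fun x _ => (house_mul_le _ _).trans ?_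
        exact mul_le_mul (hD x) (house_entry d b g q m _ _ _ r _ x.1.2 x.2.2 le_rfl hl.le (by omega))
          (house_nonneg _) hD0
    _ = _ := by simp [sq]

lemma auxF_bound (σ : K →+* ℂ) (d : ℕ) (b : 𝓞 K) (w : ℂ) {q : ℕ}
    (η : Fin q × Fin q → 𝓞 K) (D R : ℝ) (hD : ∀ x, house (η x : K) ≤ D) (hD0 : 0 ≤ D) (z : ℂ)
    (hz : ‖z‖ = R) :
    ‖auxF σ d b w η z‖ ≤ q ^ 2 * (D * Real.exp ((d + house (b : K) + 1) * q * ‖w‖ * R)) := by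
  unfold auxF
  refine (norm_sum_le _ _).trans ?_
  calc _ ≤ ∑ x : Fin q × Fin q, (D * Real.exp ((d + house (b : K) + 1) * q * ‖w‖ * R)) := by
        refine Finset.sum_le_sum fun x _ => ?_
        rw [norm_mul]
        refine mul_le_mul ((norm_embedding_le_house _ σ).trans (hD x)) ?_ (norm_nonneg _) hD0
        rw [Complex.norm_exp]
        refine Real.exp_le_exp.2 ((Complex.re_le_norm _).trans ?_)
        rw [norm_mul, norm_mul, hz]
        have hR : 0 ≤ R := hz ▸ norm_nonneg _
        gcongr
        exact (norm_embedding_le_house _ σ).trans (house_lam d b q _ _ x.1.2 x.2.2)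
    _ = _ := by simp [sq]

lemma one_le_norm_mul (σ : K →+* ℂ) (D : 𝓞 K) (hD : D ≠ 0) :
    1 ≤ ‖σ (D : K)‖ * house (D : K) ^ (Module.finrank ℚ K - 1) := by
  refine le_trans ?_ (norm_norm_le_norm_mul_house_pow (D : K) σ)
  rw [← Algebra.coe_norm_int]
  have h : Algebra.norm ℤ D ≠ 0 := Algebra.norm_ne_zero_iff.2 hD
  have h2 : (1 : ℤ) ≤ |Algebra.norm ℤ D| := Int.one_le_abs h
  have h3 : (1 : ℝ) ≤ ((|Algebra.norm ℤ D| : ℤ) : ℝ) := by exact_mod_cast h2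
  rw [← Rat.norm_cast_real]
  simpa using h3

lemma arith_x (m q n r : ℕ) (hm : 1 ≤ m) (hq : 1 ≤ q) (hnr : n ≤ r) (hqq : q * q = 2 * (n * m))
    (hr : 1 ≤ r) (x W C E : ℝ) (hx : 0 ≤ x) (hW : 0 < W) (hC : 1 ≤ C) (hE : 0 < E)
    (h : W ^ r * x ≤ (r : ℝ) ^ r * (m : ℝ) ^ (m * r) *
      ((q ^ 2 * ((C * q) ^ r * E ^ r)) / ((r : ℝ) / q) ^ (m * r))) :
    x ^ 2 * (r : ℝ) ^ (m * r) ≤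
      (((m : ℝ) ^ m) ^ 2 * (4 * m) ^ 2 * C ^ 2 * E ^ 2 * (2 * m) * (2 * m) ^ m / W ^ 2) ^ r *
        (r : ℝ) ^ (3 * r) := by
  have hr0 : (0 : ℝ) < r := by exact_mod_cast hr
  have hq0 : (0 : ℝ) < q := by exact_mod_cast hq
  have hm1 : (1 : ℝ) ≤ m := by exact_mod_cast hm
  have hQ : (q : ℝ) ^ 2 ≤ 2 * m * r := by
    have : q * q ≤ 2 * m * r := by
      rw [hqq]; calc 2 * (n * m) ≤ 2 * (r * m) := by gcongr
        _ = _ := by ring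
    rw [sq]; exact_mod_cast this
  have hQ2 : (q : ℝ) ^ 2 ≤ (4 * m) ^ r := by
    have h5 : (r : ℝ) ≤ 2 ^ r := by exact_mod_cast Nat.lt_two_pow_self.le
    have h6 : (2 * m : ℝ) ≤ (2 * m) ^ r := le_self_pow₀ (by linarith) (by omega)
    calc (q : ℝ) ^ 2 ≤ (2 * m) * r := hQ
      _ ≤ (2 * m) ^ r * 2 ^ r := by gcongr
      _ = _ := by rw [← mul_pow]; ring
  have h1 : W ^ r * x * (r : ℝ) ^ (m * r) ≤ (r : ℝ) ^ r * (m : ℝ) ^ (m * r) *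
      (q ^ 2 * (C ^ r * q ^ r * E ^ r)) * q ^ (m * r) := by
    calc _ ≤ ((r : ℝ) ^ r * (m : ℝ) ^ (m * r) *
      ((q ^ 2 * ((C * q) ^ r * E ^ r)) / ((r : ℝ) / q) ^ (m * r))) * (r : ℝ) ^ (m * r) := by gcongr
      _ = _ := by rw [div_pow, mul_pow]; field_simp
  have h2 : (W ^ r * x * (r : ℝ) ^ (m * r)) ^ 2 ≤ ((r : ℝ) ^ r * (m : ℝ) ^ (m * r) *
      (q ^ 2 * (C ^ r * q ^ r * E ^ r)) * q ^ (m * r)) ^ 2 := by gcongr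
  have h3 : ((r : ℝ) ^ r * (m : ℝ) ^ (m * r) *
      (q ^ 2 * (C ^ r * q ^ r * E ^ r)) * q ^ (m * r)) ^ 2 =
      ((r : ℝ) ^ r * (m : ℝ) ^ (m * r)) ^ 2 * (C ^ r * E ^ r) ^ 2 *
        ((q : ℝ) ^ 2) ^ 2 * ((q : ℝ) ^ 2) ^ r * ((q : ℝ) ^ 2) ^ (m * r) := by
    rw [← pow_mul (q : ℝ) 2 r, ← pow_mul (q : ℝ) 2 (m * r), mul_comm 2 r, mul_comm 2 (m * r), pow_mul, pow_mul]
    ring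
  have h4 : ((r : ℝ) ^ r * (m : ℝ) ^ (m * r)) ^ 2 * (C ^ r * E ^ r) ^ 2 *
        ((q : ℝ) ^ 2) ^ 2 * ((q : ℝ) ^ 2) ^ r * ((q : ℝ) ^ 2) ^ (m * r) ≤
      ((r : ℝ) ^ r * (m : ℝ) ^ (m * r)) ^ 2 * (C ^ r * E ^ r) ^ 2 *
        ((4 * m : ℝ) ^ r) ^ 2 * (2 * m * r : ℝ) ^ r * (2 * m * r : ℝ) ^ (m * r) := by gcongr
  have h5 : (W ^ r * x * (r : ℝ) ^ (m * r)) ^ 2 ≤ _ := h2.trans (h3.le.trans h4)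
  have h6 : (W ^ 2) ^ r * (r : ℝ) ^ (m * r) * (x ^ 2 * (r : ℝ) ^ (m * r)) ≤
    (W ^ 2) ^ r * (r : ℝ) ^ (m * r) *
    ((((m : ℝ) ^ m) ^ 2 * (4 * m) ^ 2 * C ^ 2 * E ^ 2 * (2 * m) * (2 * m) ^ m / W ^ 2) ^ r *
        (r : ℝ) ^ (3 * r)) := by
    calc _ = (W ^ r * x * (r : ℝ) ^ (m * r)) ^ 2 := by
          rw [← pow_mul W 2 r, mul_comm 2 r, pow_mul]; ring
      _ ≤ _ := h5
      _ = _ := by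
        have e1 : (r : ℝ) ^ (3 * r) = ((r : ℝ) ^ r) ^ 2 * (r : ℝ) ^ r := by
          rw [mul_comm, pow_mul]; ring
        have e2 : (2 * m * r : ℝ) ^ (m * r) = ((2 * m : ℝ) ^ m) ^ r * (r : ℝ) ^ (m * r) := by
          rw [mul_pow, pow_mul]
        have e3 : (m : ℝ) ^ (m * r) = ((m : ℝ) ^ m) ^ r := pow_mul _ _ _
        have e4 : ∀ y : ℝ, (y ^ 2) ^ r = (y ^ r) ^ 2 := fun y => by
          rw [← pow_mul, ← pow_mul, mul_comm]
        rw [e1, e2, e3, div_pow, mul_pow (2 * m : ℝ) (r : ℝ) r]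
        simp only [mul_pow _ _ r, e4]
        field_simp
  exact le_of_mul_le_mul_left h6 (by positivity)

theorem gs_core (σ : K →+* ℂ) (b g : 𝓞 K) (d : ℕ) (w : ℂ) (hw : w ≠ 0)
    (h1 : Complex.exp (d * w) = 1) (h2 : Complex.exp (σ (b : K) * w) = σ (g : K))
    (hinj : ∀ j k j' k' : ℕ, lam d b j k = lam d b j' k' → j = j' ∧ k = k') : False := by
  classical
  set h := Module.finrank ℚ K with hh
  have hh1 : 1 ≤ h := Module.finrank_pos
  set m := 2 * h + 2 with hm
  have hm1 : 1 ≤ m := by omega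
  have hm1' : (1 : ℝ) ≤ m := by exact_mod_cast hm1
  obtain ⟨C, hC, hS⟩ := siegel_step d b g m hm1
  have h0 := house_nonneg (b : K)
  have hg0 := house_nonneg (g : K)
  set C0 : ℝ := d + house (b : K) + 1 with hC0
  have hC01 : 1 ≤ C0 := by
    have : (0 : ℝ) ≤ d := by positivity
    linarith
  set C1 : ℝ := C0 * (house (g : K) + 1) ^ m with hC1
  have hC11 : 1 ≤ C1 := one_le_mul_of_one_le_of_one_le hC01 (one_le_pow₀ (by linarith))
  set E : ℝ := Real.exp (C0 * ‖w‖ * (m + 1)) with hE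
  have hW : 0 < ‖w‖ := norm_pos_iff.2 hw
  set C5 : ℝ := (4 * m) * (C * C1 * (2 * m)) with hC5
  set C6 : ℝ := ((m : ℝ) ^ m) ^ 2 * (4 * m) ^ 2 * C ^ 2 * E ^ 2 * (2 * m) * (2 * m) ^ m / ‖w‖ ^ 2 with hC6
  obtain ⟨t, ht⟩ := exists_nat_gt (max 1 (C6 * C5 ^ (2 * (h - 1))))
  have ht1 : 1 ≤ t := by
    have : (1 : ℝ) < t := (le_max_left _ _).trans_lt ht
    exact_mod_cast this.le
  have hS' := hS t ht1
  obtain ⟨q, hq⟩ : ∃ q, q = 2 * m * t := ⟨_, rfl⟩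
  obtain ⟨n, hn⟩ : ∃ n, n = 2 * m * t ^ 2 := ⟨_, rfl⟩
  rw [← hq, ← hn] at hS'
  obtain ⟨η, hη, hz, hD⟩ := hS'
  have hn1 : 1 ≤ n := by rw [hn]; exact Nat.one_le_iff_ne_zero.2 (by positivity)
  have hq1 : 1 ≤ q := by rw [hq]; exact Nat.one_le_iff_ne_zero.2 (by positivity)
  have hqn : q ≤ n := by
    rw [hq, hn]; exact Nat.mul_le_mul_left _ (by nlinarith)
  have hqq : q * q = 2 * (n * m) := by rw [hq, hn]; ring
  have htn : t ≤ n := by rw [hn]; nlinarith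
  have hq1' : (1 : ℝ) ≤ q := by exact_mod_cast hq1
  have hex : ∃ r, ∃ l < m, lform d b g η r l ≠ 0 := by
    obtain ⟨r, hr⟩ := exists_lform_ne d b g η hη hinj
    exact ⟨r, 0, hm1, hr⟩
  obtain ⟨l, hl, hlne⟩ := Nat.find_spec hex
  have hmin : ∀ l < m, ∀ a < Nat.find hex, lform d b g η a l = 0 := by
    intro l hl a ha
    have := Nat.find_min hex ha
    push Not at this
    exact this l hl
  generalize Nat.find hex = r at hlne hmin
  have hnr : n ≤ r := by
    by_contra hlt
    exact hlne (hz r (by omega) l hl)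
  have hr1 : 1 ≤ r := by omega
  have hr0 : (0 : ℝ) < r := by exact_mod_cast hr1
  have hCq : 1 ≤ C * q := one_le_mul_of_one_le_of_one_le hC hq1'
  have hDr : ∀ x, house (η x : K) ≤ (C * q) ^ r := fun x =>
    (hD x).trans (pow_le_pow_right₀ hCq hnr)
  have hQ : (q : ℝ) ^ 2 ≤ 2 * m * r := by
    have : q * q ≤ 2 * m * r := by
      rw [hqq]; calc 2 * (n * m) ≤ 2 * (r * m) := by gcongr
        _ = _ := by ring
    rw [sq]; exact_mod_cast this
  have hQ2 : (q : ℝ) ^ 2 ≤ (4 * m) ^ r := by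
    have h5 : (r : ℝ) ≤ 2 ^ r := by exact_mod_cast Nat.lt_two_pow_self.le
    have h6 : (2 * m : ℝ) ≤ (2 * m) ^ r := le_self_pow₀ (by linarith) (by omega)
    calc (q : ℝ) ^ 2 ≤ (2 * m) * r := hQ
      _ ≤ (2 * m) ^ r * 2 ^ r := by gcongr
      _ = _ := by rw [← mul_pow]; ring
  have hy : house (lform d b g η r l : K) ≤ (C5 * r) ^ r := by
    refine (house_lform d b g η m n r l _ hDr (by positivity) hl hnr hqn).trans ?_
    calc (q : ℝ) ^ 2 * ((C * q) ^ r * (C1 * q) ^ r) = (q : ℝ) ^ 2 * (C * C1 * q ^ 2) ^ r := by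
          rw [← mul_pow]; congr 2; ring
      _ ≤ (4 * m) ^ r * (C * C1 * (2 * m * r)) ^ r := by gcongr
      _ = _ := by rw [← mul_pow, hC5]; congr 1; ring
  have hx := analytic_bound (auxF_diff σ d b w η) m r l hl (fun l hl a ha => by
      rw [auxF_deriv σ d b g w h1 h2, hmin l hl a ha]; simp) (m + r / q) _
      (by have : (0 : ℝ) < r / q := by positivity
          linarith) (fun z hz => auxF_bound σ d b w η _ _ hDr (by positivity) z hz)
  rw [auxF_deriv σ d b g w h1 h2, norm_mul, norm_pow, add_sub_cancel_left] at hx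
  have hexp : Real.exp (C0 * q * ‖w‖ * (m + r / q)) ≤ E ^ r := by
    rw [hE, ← Real.exp_nat_mul]
    refine Real.exp_le_exp.2 ?_
    have : (q : ℝ) * (m + r / q) ≤ (m + 1) * r := by
      have h3 : (q : ℝ) ≤ r := by exact_mod_cast hqn.trans hnr
      have : (q : ℝ) * (m + r / q) = q * m + r := by field_simp
      rw [this]; nlinarith
    calc C0 * q * ‖w‖ * (m + r / q) = C0 * ‖w‖ * (q * (m + r / q)) := by ring
      _ ≤ C0 * ‖w‖ * ((m + 1) * r) := by gcongr
      _ = _ := by ring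
  have hfac : (r.factorial : ℝ) ≤ (r : ℝ) ^ r := by exact_mod_cast Nat.factorial_le_pow r
  have hx2 := arith_x m q n r hm1 hq1 hnr hqq hr1 ‖σ (lform d b g η r l : K)‖ ‖w‖ C E (norm_nonneg _)
    hW hC (Real.exp_pos _) (hx.trans (by gcongr))
  have hfin := final_arith h r hh1 hr1 _ _ C5 C6 (norm_nonneg _) (house_nonneg _) (by positivity)
    (by positivity) hy hx2 (one_le_norm_mul σ _ hlne)
  have h7 : (t : ℝ) ≤ r := by exact_mod_cast htn.trans hnr
  have h8 := (le_max_right _ _).trans_lt ht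
  linarith

end PeakAux

namespace PeakAux
open NumberField

theorem gs_complex (β γ : ℂ) (hβ : IsAlgebraic ℤ β) (hγ : IsIntegral ℤ γ) (him : β.im ≠ 0)
    (hexp : Complex.exp (2 * Real.pi * Complex.I * β) = γ) : False := by
  obtain ⟨y, hy0, hy⟩ := hβ.exists_integral_multiple
  obtain ⟨d, hd0, hd⟩ : ∃ d : ℕ, d ≠ 0 ∧ IsIntegral ℤ ((d : ℂ) * β) := by
    refine ⟨y.natAbs, by simpa using hy0, ?_⟩
    rcases Int.natAbs_eq y with h | h
    · have h2 : y • β = (y.natAbs : ℂ) * β := by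
        rw [h]; simp
      rwa [← h2]
    · have h2 : y • β = -((y.natAbs : ℂ) * β) := by
        rw [h]; simp
      rw [h2] at hy
      simpa using hy.neg
  have hdC : (d : ℂ) ≠ 0 := by exact_mod_cast hd0
  let S : Set ℂ := {(d : ℂ) * β, γ}
  let K := IntermediateField.adjoin ℚ S
  have hfin : FiniteDimensional ℚ K := by
    apply IntermediateField.finiteDimensional_adjoin
    intro x hx
    rcases hx with rfl | hx
    · exact hd.tower_top
    · rw [Set.mem_singleton_iff.1 hx]; exact hγ.tower_top
  have : NumberField K := ⟨⟩
  have hm1 : (d : ℂ) * β ∈ K := IntermediateField.subset_adjoin ℚ S (by simp [S])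
  have hm2 : γ ∈ K := IntermediateField.subset_adjoin ℚ S (by simp [S])
  have hinjv : Function.Injective (algebraMap K ℂ) := (algebraMap K ℂ).injective
  have hb : IsIntegral ℤ (⟨_, hm1⟩ : K) := by
    rw [← isIntegral_algHom_iff (K.val.restrictScalars ℤ) K.val.injective]
    exact hd
  have hg : IsIntegral ℤ (⟨_, hm2⟩ : K) := by
    rw [← isIntegral_algHom_iff (K.val.restrictScalars ℤ) K.val.injective]
    exact hγ
  refine gs_core (algebraMap K ℂ) ⟨_, hb⟩ ⟨_, hg⟩ d (2 * Real.pi * Complex.I / d) ?_ ?_ ?_ ?_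
  · simp [hd0, Real.pi_ne_zero]
  · rw [mul_div_cancel₀ _ hdC]; exact Complex.exp_two_pi_mul_I
  · change Complex.exp (((d : ℂ) * β) * _) = γ
    rw [← hexp]; congr 1; field_simp
  · intro j k j' k' h
    have h1 := congrArg (fun x : 𝓞 K => algebraMap K ℂ (x : K)) h
    have h2 : ∀ j k : ℕ, algebraMap K ℂ ((lam d (⟨_, hb⟩ : 𝓞 K) j k : 𝓞 K) : K) =
        d * j + k * (d * β) := by
      intro j k
      simp only [lam, map_add, map_mul, map_natCast]
      rfl
    simp only [h2] at h1
    have h3 := congrArg Complex.im h1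
    have h4 := congrArg Complex.re h1
    simp at h3 
    have hk : k = k' := by
      rcases h3 with h3 | h3
      · exact h3
      · rcases h3 with h3 | h3
        · exact absurd h3 hd0
        · exact absurd h3 him
    subst hk
    simp [hd0] at h4
    exact ⟨h4, rfl⟩

theorem irr (d : ℕ) (hd : 1 ≤ d) :
    Real.sin (d * Real.arctan (Real.pi / Real.log (3 + 2 * Real.sqrt 2))) ≠ 0 := by
  intro hs
  have hL : 0 < Real.log (3 + 2 * Real.sqrt 2) :=
    Real.log_pos (by have := Real.sqrt_nonneg 2; linarith)
  obtain ⟨L, hLe⟩ : ∃ L, L = Real.log (3 + 2 * Real.sqrt 2) := ⟨_, rfl⟩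
  rw [← hLe] at hs hL
  obtain ⟨θ, hθ⟩ : ∃ θ, θ = Real.arctan (Real.pi / L) := ⟨_, rfl⟩
  rw [← hθ] at hs
  have hcos : 0 < Real.cos θ := by rw [hθ]; exact Real.cos_arctan_pos _
  have htan : Real.sin θ * L = Real.pi * Real.cos θ := by
    have h1 : Real.tan θ = Real.pi / L := by rw [hθ, Real.tan_arctan]
    rw [Real.tan_eq_sin_div_cos] at h1
    field_simp at h1
    linarith
  have hsin : Real.sin θ ≠ 0 := by
    intro h
    rw [h] at htan
    have := mul_pos Real.pi_pos hcos
    linarith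
  have hsC : Complex.sin θ ≠ 0 := by exact_mod_cast hsin
  have halg : ∀ z : ℂ, z ^ (2 * d) = 1 → IsAlgebraic ℚ z := fun z hz =>
    (IsIntegral.of_pow (n := 2 * d) (by omega) (by rw [hz]; exact isIntegral_one)).isAlgebraic
  have hz : ∀ e : ℂ, e ^ 2 = 1 → IsAlgebraic ℚ (Complex.exp (e * θ * Complex.I)) := by
    intro e he
    have h0 : IsAlgebraic ℚ (Complex.exp (θ * Complex.I)) := by
      apply halg
      rw [mul_comm 2 d, pow_mul, ← Complex.exp_nat_mul, ← mul_assoc, Complex.exp_mul_I]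
      have h1 : Complex.sin ((d : ℂ) * θ) = 0 := by exact_mod_cast hs
      have h2 := Complex.sin_sq_add_cos_sq ((d : ℂ) * θ)
      rw [h1] at h2 ⊢
      simpa using h2
    rcases (sq_eq_one_iff.1 he : e = 1 ∨ e = -1) with rfl | rfl
    · simpa using h0
    · have : Complex.exp (-1 * θ * Complex.I) = (Complex.exp (θ * Complex.I))⁻¹ := by
        rw [← Complex.exp_neg]; congr 1; ring
      rw [this]; exact h0.inv
  have hI : IsAlgebraic ℚ Complex.I := by
    refine (IsIntegral.of_pow (n := 2) (by omega) ?_).isAlgebraic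
    rw [Complex.I_sq]; exact isIntegral_one.neg
  have h2 : IsAlgebraic ℚ (2 : ℂ) := isAlgebraic_algebraMap (2 : ℚ)
  have hc : IsAlgebraic ℚ (Complex.cos θ) := by
    rw [Complex.cos, div_eq_mul_inv]
    refine IsAlgebraic.mul (IsAlgebraic.add ?_ ?_) h2.inv
    · simpa using hz 1 (by norm_num)
    · simpa using hz (-1) (by norm_num)
  have hsn : IsAlgebraic ℚ (Complex.sin θ) := by
    rw [Complex.sin, div_eq_mul_inv]
    refine IsAlgebraic.mul (IsAlgebraic.mul (IsAlgebraic.sub ?_ ?_) hI) h2.inv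
    · simpa using hz (-1) (by norm_num)
    · simpa using hz 1 (by norm_num)
  have hLC : (L : ℂ) ≠ 0 := by exact_mod_cast hL.ne'
  have hpiC : (Real.pi : ℂ) ≠ 0 := by exact_mod_cast Real.pi_ne_zero
  have hβe : Complex.cos θ * (2 * Complex.I * Complex.sin θ)⁻¹ =
      ((-(L / (2 * Real.pi)) : ℝ) : ℂ) * Complex.I := by
    have : Complex.sin θ * L = Real.pi * Complex.cos θ := by exact_mod_cast htan
    have hc' : Complex.cos θ = Complex.sin θ * L / Real.pi := by
      rw [this]; field_simp
    rw [hc']; push_cast; field_simp; simp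
  refine gs_complex (Complex.cos θ * (2 * Complex.I * Complex.sin θ)⁻¹)
    ((3 + 2 * Real.sqrt 2 : ℝ) : ℂ) ?_ ?_ ?_ ?_
  · have : IsAlgebraic ℚ (Complex.cos θ * (2 * Complex.I * Complex.sin θ)⁻¹) :=
      hc.mul ((h2.mul hI).mul hsn).inv
    exact (IsFractionRing.isAlgebraic_iff ℤ ℚ ℂ).2 this
  · have hr2 : IsIntegral ℤ ((Real.sqrt 2 : ℝ) : ℂ) := by
      refine IsIntegral.of_pow (n := 2) (by omega) ?_
      have : ((Real.sqrt 2 : ℝ) : ℂ) ^ 2 = ((2 : ℤ) : ℂ) := by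
        rw [← Complex.ofReal_pow, Real.sq_sqrt (by norm_num)]; simp
      rw [this]; exact isIntegral_algebraMap (R := ℤ) (x := 2)
    have h3 : IsIntegral ℤ (((3 : ℤ) : ℂ)) := isIntegral_algebraMap (R := ℤ) (x := 3)
    have h2 : IsIntegral ℤ (((2 : ℤ) : ℂ)) := isIntegral_algebraMap (R := ℤ) (x := 2)
    have := h3.add (h2.mul hr2)
    push_cast at this ⊢
    exact this
  · rw [hβe, Complex.im_ofReal_mul]
    have : 0 < L / (2 * Real.pi) := by have := Real.pi_pos; positivity
    simp [hL.ne']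
  · rw [hβe]
    have : 2 * (Real.pi : ℂ) * Complex.I * (((-(L / (2 * Real.pi)) : ℝ) : ℂ) * Complex.I) = (L : ℂ) := by
      push_cast; field_simp; simp
    rw [this, ← Complex.ofReal_exp, hLe, Real.exp_log]
    have := Real.sqrt_nonneg 2; linarith

end PeakAux

namespace PeakAux
open Finset

/-- Peak set of a word of length `n`. -/
def pset (n : ℕ) (a : ℕ → ℕ) : Finset ℕ :=
  (range n).filter fun i => 1 ≤ i ∧ i + 1 < n ∧ a (i - 1) < a i ∧ a (i + 1) < a i

/-- Insertion of a letter `n` at position `i`. -/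
def insW (n : ℕ) (a : ℕ → ℕ) (i k : ℕ) : ℕ :=
  if k < i then a k else if k = i then n else a (k - 1)

lemma mem_pset_ins (n : ℕ) (a : ℕ → ℕ) (ha : ∀ k < n, a k < n) (i k : ℕ) (hi : i ≤ n) :
    k ∈ pset (n + 1) (insW n a i) ↔
      (k ∈ pset n a ∧ k + 1 < i) ∨ (k = i ∧ 1 ≤ i ∧ i < n) ∨
      (1 ≤ k ∧ k - 1 ∈ pset n a ∧ i < k - 1) := by
  rcases lt_trichotomy (k + 1) i with h | h | h
  · have h1 : k - 1 < i := by omega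
    have h2 : k < i := by omega
    simp [pset, insW, h, h1, h2]
    omega
  · have h1 : k - 1 < i := by omega
    have h2 : k < i := by omega
    have := ha k
    simp [pset, insW, h, h1, h2]
    omega
  · rcases lt_trichotomy k (i + 1) with h' | h' | h'
    · obtain rfl : k = i := by omega
      have h3 := ha (k - 1)
      have h4 := ha k
      simp [pset, insW]
      constructor
      · omega
      · intro hk
        have hk1 : 1 ≤ k ∧ k < n := by omega
        rw [if_pos (by omega)]
        omega
    · subst h'
      have := ha i
      simp [pset, insW]
      omega
    · obtain ⟨k, rfl⟩ : ∃ k', k = k' + 1 := ⟨k - 1, by omega⟩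
      simp [pset, insW, show ¬ (k < i) by omega, show ¬ (k + 1 < i) by omega,
        show ¬ (k + 1 + 1 < i) by omega,
        show ¬ (k = i) by omega, show ¬ (k + 1 = i) by omega, show ¬ (k + 1 + 1 = i) by omega]
      omega

lemma card_pset_ins (n : ℕ) (a : ℕ → ℕ) (ha : ∀ k < n, a k < n) (i : ℕ) (hi : i ≤ n) :
    #(pset (n + 1) (insW n a i)) + (if (1 ≤ i ∧ i - 1 ∈ pset n a) then 1 else 0)
      + (if i ∈ pset n a then 1 else 0) = #(pset n a) + (if 1 ≤ i ∧ i < n then 1 else 0) := by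
  classical
  have h1 : pset (n + 1) (insW n a i) = ((pset n a).filter (fun k => k + 1 < i) ∪
      ((pset n a).filter (fun k => i < k)).map (addRightEmbedding 1)) ∪
      (if 1 ≤ i ∧ i < n then {i} else ∅) := by
    ext k
    rw [mem_pset_ins n a ha i k hi]
    simp only [mem_union, mem_filter, mem_map, addRightEmbedding_apply]
    have : k ∈ (if 1 ≤ i ∧ i < n then {i} else ∅ : Finset ℕ) ↔ k = i ∧ 1 ≤ i ∧ i < n := by
      split_ifs <;> simp <;> omega
    rw [this]
    constructor
    · rintro (h | h | h)
      · exact Or.inl (Or.inl h)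
      · exact Or.inr h
      · exact Or.inl (Or.inr ⟨k - 1, h.2, by omega⟩)
    · rintro ((h | ⟨j, h, rfl⟩) | h)
      · exact Or.inl h
      · exact Or.inr (Or.inr ⟨by omega, by simpa using h⟩)
      · exact Or.inr (Or.inl h)
  have h2 : pset n a = ((pset n a).filter (fun k => k + 1 < i) ∪
      ((pset n a).filter (fun k => i < k))) ∪ ((pset n a).filter (fun k => k + 1 = i) ∪
      ((pset n a).filter (fun k => k = i))) := by
    ext k
    simp only [mem_union, mem_filter]
    have : k + 1 < i ∨ i < k ∨ k + 1 = i ∨ k = i := by omega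
    tauto
  have h3 : #((pset n a).filter (fun k => k + 1 = i)) =
      if (1 ≤ i ∧ i - 1 ∈ pset n a) then 1 else 0 := by
    split_ifs with h
    · rw [card_eq_one]
      refine ⟨i - 1, ?_⟩
      ext k
      simp only [mem_filter, mem_singleton]
      constructor
      · omega
      · rintro rfl; exact ⟨h.2, by omega⟩
    · rw [card_eq_zero, filter_eq_empty_iff]
      rintro k hk rfl
      exact h ⟨by omega, by simpa using hk⟩
  have h4 : #((pset n a).filter (fun k => k = i)) =
      if i ∈ pset n a then 1 else 0 := by
    rw [filter_eq']
    split_ifs <;> simp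
  have h5 : #(if 1 ≤ i ∧ i < n then {i} else ∅ : Finset ℕ) = if 1 ≤ i ∧ i < n then 1 else 0 := by
    split_ifs <;> simp
  have h6 := congrArg card h1
  have h7 := congrArg card h2
  rw [card_union_of_disjoint, card_union_of_disjoint, card_map, h5] at h6
  rw [card_union_of_disjoint, card_union_of_disjoint, card_union_of_disjoint, h3, h4] at h7
  · omega
  all_goals
    rw [disjoint_left]
    intro k
    try (split_ifs)
    all_goals simp
    all_goals omega

lemma sum_ins {M : Type*} [CommRing M] (n : ℕ) (hn : 1 ≤ n) (a : ℕ → ℕ) (ha : ∀ k < n, a k < n)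
    (g : ℕ → M) : 2 * #(pset n a) + 1 ≤ n ∧
    ∑ i ∈ range (n + 1), g #(pset (n + 1) (insW n a i)) =
      (2 * #(pset n a) + 2 : ℕ) * g #(pset n a) +
      (n - 1 - 2 * #(pset n a) : ℕ) * g (#(pset n a) + 1) := by
  classical
  set S := pset n a with hS
  have hmem : ∀ k ∈ S, 1 ≤ k ∧ k + 1 < n := fun k hk => by
    simp [hS, pset] at hk; omega
  have hadj : ∀ k ∈ S, k + 1 ∉ S := fun k hk hk' => by
    simp [hS, pset] at hk hk'; omega
  set T := (S ∪ S.map (addRightEmbedding 1)) ∪ {0, n} with hT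
  have hTmem : ∀ i, i ∈ T ↔ (i ∈ S ∨ (1 ≤ i ∧ i - 1 ∈ S)) ∨ (i = 0 ∨ i = n) := by
    intro i
    simp only [hT, mem_union, mem_map, addRightEmbedding_apply, mem_insert, mem_singleton]
    have : (∃ j ∈ S, j + 1 = i) ↔ (1 ≤ i ∧ i - 1 ∈ S) := by
      constructor
      · rintro ⟨j, h, rfl⟩; exact ⟨by omega, by simpa using h⟩
      · rintro ⟨h, h'⟩; exact ⟨i - 1, h', by omega⟩
    rw [this]
  have hTc : #T = 2 * #S + 2 := by
    rw [hT, card_union_of_disjoint, card_union_of_disjoint, card_map, card_pair (by omega)]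
    · ring
    · rw [disjoint_left]
      intro k hk hk'
      simp only [mem_map, addRightEmbedding_apply] at hk'
      obtain ⟨j, hj, rfl⟩ := hk'
      exact hadj j hj hk
    · rw [disjoint_left]
      intro k hk hk'
      simp only [mem_union, mem_map, addRightEmbedding_apply] at hk
      simp only [mem_insert, mem_singleton] at hk'
      rcases hk with hk | ⟨j, hj, rfl⟩
      · have := hmem k hk; omega
      · have := hmem j hj; omega
  have hTsub : T ⊆ range (n + 1) := by
    intro i hi
    rw [hTmem] at hi
    rw [mem_range]
    rcases hi with (h | h) | h | h
    · have := hmem _ h; omega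
    · have := hmem _ h.2; omega
    · omega
    · omega
  have hle := card_le_card hTsub
  rw [hTc, card_range] at hle
  refine ⟨by omega, ?_⟩
  have hval : ∀ i ∈ range (n + 1), g #(pset (n + 1) (insW n a i)) =
      if i ∈ T then g #S else g (#S + 1) := by
    intro i hi
    have h1 := card_pset_ins n a ha i (by simpa [Nat.lt_succ_iff] using hi)
    rw [← hS] at h1
    have h2 := hTmem i
    have hi' : i ≤ n := by simpa [Nat.lt_succ_iff] using hi
    by_cases ha1 : i ∈ S
    · have := hmem i ha1
      have h3 : ¬ (1 ≤ i ∧ i - 1 ∈ S) := fun h => by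
        have := hadj _ h.2
        rw [Nat.sub_add_cancel h.1] at this
        exact this ha1
      rw [if_neg h3, if_pos ha1, if_pos (by omega)] at h1
      rw [if_pos (by tauto)]
      congr 1; omega
    · by_cases ha2 : 1 ≤ i ∧ i - 1 ∈ S
      · have := hmem _ ha2.2
        rw [if_pos ha2, if_neg ha1, if_pos (by omega)] at h1
        rw [if_pos (by tauto)]
        congr 1; omega
      · rw [if_neg ha2, if_neg ha1] at h1
        by_cases ha3 : i = 0 ∨ i = n
        · rw [if_neg (by omega)] at h1
          rw [if_pos (by tauto)]
          congr 1
        · rw [if_pos (by omega)] at h1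
          rw [if_neg (by tauto)]
          congr 1
  rw [sum_congr rfl hval, sum_ite, sum_const, sum_const, filter_mem_eq_inter,
    inter_eq_right.2 hTsub, filter_not, filter_mem_eq_inter, inter_eq_right.2 hTsub,
    card_sdiff_of_subset hTsub, hTc, card_range, nsmul_eq_mul, nsmul_eq_mul]
  congr 3
  omega

/-- One-line word of a permutation. -/
def wordP {n : ℕ} (σ : Equiv.Perm (Fin n)) (k : ℕ) : ℕ := if h : k < n then (σ ⟨k, h⟩ : ℕ) else 0

lemma wordP_lt {n : ℕ} (σ : Equiv.Perm (Fin n)) (k : ℕ) (hk : k < n) : wordP σ k < n := by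
  simp [wordP, hk]

lemma numPeaks_eq {n : ℕ} (σ : Equiv.Perm (Fin n)) : numPeaks σ = #(pset n (wordP σ)) := by
  classical
  rw [numPeaks, ← card_map Fin.valEmbedding]
  congr 1
  ext k
  simp only [mem_map, mem_filter, mem_univ, true_and, Fin.valEmbedding_apply, pset, mem_range]
  constructor
  · rintro ⟨i, ⟨h1, h2, h3, h4⟩, rfl⟩
    refine ⟨i.2, h1, h2, ?_, ?_⟩
    · simpa [wordP, show (i : ℕ) - 1 < n by omega] using h3
    · simpa [wordP, h2] using h4
  · rintro ⟨hk, h1, h2, h3, h4⟩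
    refine ⟨⟨k, hk⟩, ⟨h1, h2, ?_, ?_⟩, rfl⟩
    · simpa [wordP, show k - 1 < n by omega, hk] using h3
    · simpa [wordP, h2, hk] using h4

/-- Insertion of the maximum into a permutation. -/
def insP {n : ℕ} (x : Fin (n + 1) × Equiv.Perm (Fin n)) : Equiv.Perm (Fin (n + 1)) :=
  (finSuccEquiv' x.1).trans ((Equiv.optionCongr x.2).trans (finSuccEquiv' (Fin.last n)).symm)

lemma insP_self {n : ℕ} (x : Fin (n + 1) × Equiv.Perm (Fin n)) : insP x x.1 = Fin.last n := by
  simp [insP]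

lemma insP_succAbove {n : ℕ} (x : Fin (n + 1) × Equiv.Perm (Fin n)) (k : Fin n) :
    insP x (x.1.succAbove k) = (x.2 k).castSucc := by
  simp [insP]

lemma insP_bij {n : ℕ} : Function.Bijective (insP (n := n)) := by
  rw [Fintype.bijective_iff_injective_and_card]
  constructor
  · rintro ⟨i, σ⟩ ⟨j, τ⟩ h
    have hij : i = j := by
      have h1 := insP_self (i, σ)
      have h2 := insP_self (j, τ)
      rw [h] at h1
      exact (insP (j, τ)).injective (h1.trans h2.symm)
    subst hij
    congr 1
    ext k
    have h1 := insP_succAbove (i, σ) k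
    have h2 := insP_succAbove (i, τ) k
    rw [h, h2] at h1
    have := congrArg Fin.val h1
    simpa using this.symm
  · simp [Fintype.card_perm, Nat.factorial_succ]

lemma wordP_insP {n : ℕ} (x : Fin (n + 1) × Equiv.Perm (Fin n)) (k : ℕ) (hk : k < n + 1) :
    wordP (insP x) k = insW n (wordP x.2) x.1 k := by
  have hx := x.1.2
  rcases lt_trichotomy k (x.1 : ℕ) with h | h | h
  · have hkn : k < n := by omega
    have h1 := insP_succAbove x ⟨k, hkn⟩
    rw [Fin.succAbove_of_castSucc_lt _ _ (by simpa [Fin.lt_def] using h)] at h1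
    simp only [wordP, hk, insW, h, hkn, dif_pos, if_true]
    exact congrArg Fin.val h1
  · have h1 := insP_self x
    subst h
    simp [wordP, insW, h1]
    omega
  · have hkn : k - 1 < n := by omega
    have h1 := insP_succAbove x ⟨k - 1, hkn⟩
    rw [Fin.succAbove_of_le_castSucc _ _ (by simp [Fin.le_def]; omega)] at h1
    simp only [wordP, hk, insW, hkn, dif_pos, show ¬ k < x.1 by omega, show ¬ k = x.1 by omega, if_false]
    have h2 : (⟨k - 1, hkn⟩ : Fin n).succ = ⟨k, hk⟩ := by
      ext; simp; omega
    rw [h2] at h1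
    exact congrArg Fin.val h1

lemma pset_congr {n : ℕ} {a a' : ℕ → ℕ} (h : ∀ k < n, a k = a' k) : pset n a = pset n a' := by
  unfold pset
  apply filter_congr
  intro i hi
  rw [mem_range] at hi
  constructor
  · rintro ⟨h1, h2, h3, h4⟩
    rw [h _ hi, h _ (by omega)] at h3 h4
    exact ⟨h1, h2, h3, h4⟩
  · rintro ⟨h1, h2, h3, h4⟩
    rw [← h _ hi, ← h _ (by omega)] at h3 h4
    exact ⟨h1, h2, h3, h4⟩

lemma two_numPeaks_le {n : ℕ} (hn : 1 ≤ n) (σ : Equiv.Perm (Fin n)) : 2 * numPeaks σ + 1 ≤ n := by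
  rw [numPeaks_eq]
  exact (sum_ins n hn (wordP σ) (wordP_lt σ) (fun _ => (0 : ℤ))).1

theorem sum_perm_succ {M : Type*} [CommRing M] (n : ℕ) (hn : 1 ≤ n) (g : ℕ → M) :
    ∑ π : Equiv.Perm (Fin (n + 1)), g (numPeaks π) =
    ∑ σ : Equiv.Perm (Fin n), ((2 * numPeaks σ + 2 : ℕ) * g (numPeaks σ) +
      (n - 1 - 2 * numPeaks σ : ℕ) * g (numPeaks σ + 1)) := by
  rw [← insP_bij.sum_comp, Fintype.sum_prod_type_right]
  refine sum_congr rfl fun σ _ => ?_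
  rw [numPeaks_eq σ, ← (sum_ins n hn (wordP σ) (wordP_lt σ) g).2, ← Fin.sum_univ_eq_sum_range
    (fun i => g #(pset (n + 1) (insW n (wordP σ) i)))]
  refine sum_congr rfl fun i _ => ?_
  rw [numPeaks_eq, pset_congr (fun k hk => wordP_insP (i, σ) k hk)]

end PeakAux

namespace PeakAux
open Finset

/-- Two-variable peak polynomial. -/
noncomputable def WW (n : ℕ) (A b : ℂ) : ℂ :=
  ∑ π : Equiv.Perm (Fin n), A ^ (numPeaks π + 1) * b ^ (n - 1 - 2 * numPeaks π)

lemma WW_one (A b : ℂ) : WW 1 A b = A := by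
  have h : ∀ π : Equiv.Perm (Fin 1), numPeaks π = 0 := fun π => by
    have := two_numPeaks_le le_rfl π
    omega
  simp [WW, h]

lemma WW_f (n : ℕ) : WW n (-1) 1 = -((f n : ℝ) : ℂ) := by
  simp only [WW, f, peakPoly, one_pow, mul_one, pow_succ]
  push_cast
  rw [← Finset.sum_mul]; ring

lemma WW_deriv (n : ℕ) (hn : 1 ≤ n) (A b : ℂ → ℂ) (μ z : ℂ) (hb : HasDerivAt b (μ * A z) z)
    (hA : HasDerivAt A (2 * μ * A z * b z) z) :
    HasDerivAt (fun z => WW n (A z) (b z)) (μ * WW (n + 1) (A z) (b z)) z := by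
  have h1 : WW (n + 1) (A z) (b z) = _ := sum_perm_succ n hn
    (fun p => A z ^ (p + 1) * b z ^ (n + 1 - 1 - 2 * p))
  rw [h1, mul_sum]
  refine HasDerivAt.fun_sum fun σ _ => ?_
  have h2 := two_numPeaks_le hn σ
  generalize numPeaks σ = p at h2
  obtain ⟨m, rfl⟩ : ∃ m, n = 2 * p + 1 + m := ⟨n - (2 * p + 1), by omega⟩
  have h3 := (hA.pow (p + 1)).mul (hb.pow (2 * p + 1 + m - 1 - 2 * p))
  refine h3.congr_deriv ?_
  simp only [Pi.pow_apply]
  rw [show 2 * p + 1 + m - 1 - 2 * p = m by omega, show 2 * p + 1 + m + 1 - 1 - 2 * p = m + 1 by omega,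
    show 2 * p + 1 + m + 1 - 1 - 2 * (p + 1) = m - 1 by omega]
  rcases m with _ | m
  · simp; ring
  · simp; ring

lemma cot_deriv (z : ℂ) (hz : 0 < z.im) :
    HasDerivAt (fun x : ℂ => (Real.pi : ℂ) * Complex.cot (Real.pi * x))
      (-(Real.pi ^ 2 + (Real.pi * Complex.cot (Real.pi * z)) ^ 2)) z := by
  have hs : Complex.sin (Real.pi * z) ≠ 0 := by
    rw [Complex.sin_ne_zero_iff]
    intro k h
    have h1 : z = k := by
      have hp : (Real.pi : ℂ) ≠ 0 := by exact_mod_cast Real.pi_ne_zero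
      rw [mul_comm] at h
      exact mul_right_cancel₀ hp h
    rw [h1] at hz
    simp at hz
  have h0 : HasDerivAt (fun x : ℂ => (Real.pi : ℂ) * x) Real.pi z := by
    simpa using (hasDerivAt_id z).const_mul (Real.pi : ℂ)
  have h1 := ((h0.ccos.div h0.csin hs).const_mul (Real.pi : ℂ))
  have h2 : (fun x : ℂ => (Real.pi : ℂ) * Complex.cot (Real.pi * x)) =
      fun x : ℂ => (Real.pi : ℂ) * (Complex.cos (Real.pi * x) / Complex.sin (Real.pi * x)) := rfl
  rw [h2]
  refine h1.congr_deriv ?_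
  rw [Complex.cot]
  field_simp
  ring

lemma iter_eq (κ : ℂ) (hκ : κ ^ 2 * Real.pi ^ 2 = -2) (n : ℕ) (hn : 1 ≤ n) :
    ∀ z ∈ UpperHalfPlane.upperHalfPlaneSet,
    iteratedDerivWithin n (fun x : ℂ => (Real.pi : ℂ) * Complex.cot (Real.pi * x))
      UpperHalfPlane.upperHalfPlaneSet z =
    κ⁻¹ * (-κ⁻¹) ^ n * WW n ((κ * (Real.pi * Complex.cot (Real.pi * z))) ^ 2 - 2)
      (κ * (Real.pi * Complex.cot (Real.pi * z))) := by
  have hκ0 : κ ≠ 0 := by rintro rfl; norm_num at hκ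
  have hopen := UpperHalfPlane.isOpen_upperHalfPlaneSet
  induction n, hn using Nat.le_induction with
  | base =>
    intro z hz
    rw [iteratedDerivWithin_one, derivWithin_of_isOpen hopen hz, (cot_deriv z hz).deriv, WW_one]
    have : (2 : ℂ) = - (κ ^ 2 * Real.pi ^ 2) := by rw [hκ]; ring
    rw [this]
    field_simp
    ring
  | succ n hn ih =>
    intro z hz
    rw [iteratedDerivWithin_succ, derivWithin_congr ih (ih z hz), derivWithin_of_isOpen hopen hz]
    have hb : HasDerivAt (fun z : ℂ => κ * (Real.pi * Complex.cot (Real.pi * z)))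
        (-κ⁻¹ * ((κ * (Real.pi * Complex.cot (Real.pi * z))) ^ 2 - 2)) z := by
      refine ((cot_deriv z hz).const_mul κ).congr_deriv ?_
      have : (2 : ℂ) = - (κ ^ 2 * Real.pi ^ 2) := by rw [hκ]; ring
      rw [this]
      field_simp
      ring
    have hA : HasDerivAt (fun z : ℂ => (κ * (Real.pi * Complex.cot (Real.pi * z))) ^ 2 - 2)
        (2 * -κ⁻¹ * ((κ * (Real.pi * Complex.cot (Real.pi * z))) ^ 2 - 2) *
          (κ * (Real.pi * Complex.cot (Real.pi * z)))) z := by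
      refine ((hb.pow 2).sub_const 2).congr_deriv ?_
      push_cast; ring
    have h := WW_deriv n hn (fun z : ℂ => (κ * (Real.pi * Complex.cot (Real.pi * z))) ^ 2 - 2)
      (fun z : ℂ => κ * (Real.pi * Complex.cot (Real.pi * z))) (-κ⁻¹) z hb hA
    rw [(h.const_mul (κ⁻¹ * (-κ⁻¹) ^ n)).deriv]
    ring

/-- The logarithm. -/
noncomputable def LL : ℝ := Real.log (3 + 2 * Real.sqrt 2)

lemma LL_pos : 0 < LL := Real.log_pos (by have := Real.sqrt_nonneg 2; linarith)

/-- The poles. -/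
noncomputable def cc (k : ℤ) : ℂ :=
  2 * ((Real.sqrt 2 : ℝ) : ℂ) / (LL - Real.pi * (2 * k + 1) * Complex.I)

lemma den_ne (k : ℤ) : (LL : ℂ) - Real.pi * (2 * k + 1) * Complex.I ≠ 0 := by
  intro h
  have := congrArg Complex.re h
  simp at this
  exact LL_pos.ne' this

lemma pi_ne : (Real.pi : ℂ) ≠ 0 := by exact_mod_cast Real.pi_ne_zero

lemma sq2 : ((Real.sqrt 2 : ℝ) : ℂ) ^ 2 = 2 := by
  rw [← Complex.ofReal_pow, Real.sq_sqrt (by norm_num)]; simp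

/-- The base point. -/
noncomputable def tau : ℂ := 1 / 2 + LL / (2 * Real.pi) * Complex.I

lemma tau_im : 0 < tau.im := by
  have : tau = ((1 / 2 : ℝ) : ℂ) + ((LL / (2 * Real.pi) : ℝ) : ℂ) * Complex.I := by
    simp [tau]
  rw [this]
  simp only [Complex.add_im, Complex.ofReal_im, Complex.mul_im, Complex.ofReal_re, Complex.I_im, Complex.I_re]
  have h1 := LL_pos
  have h2 := Real.pi_pos
  simp; positivity

lemma tau_add_ne (k : ℤ) : tau + k ≠ 0 := by
  intro h
  have := congrArg Complex.im h
  simp at this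
  exact tau_im.ne' this

lemma cc_eq (k : ℤ) : cc k = Complex.I * ((Real.sqrt 2 : ℝ) : ℂ) / Real.pi / (tau + k) := by
  have h1 := den_ne k
  have h2 := tau_add_ne k
  have h3 : (LL : ℂ) - Real.pi * (2 * k + 1) * Complex.I = -(2 * Complex.I * Real.pi) * (tau + k) := by
    have := pi_ne
    rw [tau]; field_simp; ring_nf; simp
  have hpi := pi_ne
  rw [cc, h3]
  field_simp
  simp

lemma cot_tau : Complex.I * ((Real.sqrt 2 : ℝ) : ℂ) / Real.pi * (Real.pi * Complex.cot (Real.pi * tau)) = 1 := by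
  have hpi := pi_ne
  have h2 := sq2
  have he : Complex.exp (2 * Real.pi * Complex.I * tau) = -(3 - 2 * ((Real.sqrt 2 : ℝ) : ℂ)) := by
    have h1 : 2 * Real.pi * Complex.I * tau = Real.pi * Complex.I + -((LL : ℝ) : ℂ) := by
      rw [tau]; field_simp; ring_nf; simp; ring
    rw [h1, Complex.exp_add, Complex.exp_pi_mul_I, Complex.exp_neg, ← Complex.ofReal_exp, LL, Real.exp_log
      (by have := Real.sqrt_nonneg 2; linarith)]
    have h3 : ((3 + 2 * Real.sqrt 2 : ℝ) : ℂ)⁻¹ = 3 - 2 * ((Real.sqrt 2 : ℝ) : ℂ) := by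
      apply inv_eq_of_mul_eq_one_right
      push_cast
      linear_combination (-4) * h2
    rw [h3]; ring
  rw [Complex.cot_pi_eq_exp_ratio, he]
  have hne : (1 - -(3 - 2 * ((Real.sqrt 2 : ℝ) : ℂ))) ≠ 0 := by
    have : (4 - 2 * Real.sqrt 2 : ℝ) ≠ 0 := by
      have := Real.sqrt_lt_sqrt (x := 2) (y := 4) (by norm_num) (by norm_num)
      rw [show (4 : ℝ) = 2 ^ 2 by norm_num, Real.sqrt_sq (by norm_num)] at this
      linarith
    have h : (1 - -(3 - 2 * ((Real.sqrt 2 : ℝ) : ℂ))) = ((4 - 2 * Real.sqrt 2 : ℝ) : ℂ) := by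
      push_cast; ring
    rw [h]; exact_mod_cast this
  have hI := Complex.I_ne_zero
  have e1 : Complex.I * ((Real.sqrt 2 : ℝ) : ℂ) / Real.pi * (Real.pi *
      ((-(3 - 2 * ((Real.sqrt 2 : ℝ) : ℂ)) + 1) /
        (Complex.I * (1 - -(3 - 2 * ((Real.sqrt 2 : ℝ) : ℂ)))))) =
      ((Real.sqrt 2 : ℝ) : ℂ) * (-(3 - 2 * ((Real.sqrt 2 : ℝ) : ℂ)) + 1) /
        (1 - -(3 - 2 * ((Real.sqrt 2 : ℝ) : ℂ))) := by
    rw [mul_comm Complex.I (1 - _), ← div_div]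
    generalize (-(3 - 2 * ((Real.sqrt 2 : ℝ) : ℂ)) + 1) = x
    generalize (1 - -(3 - 2 * ((Real.sqrt 2 : ℝ) : ℂ))) = y
    field_simp
  rw [e1, div_eq_one_iff_eq hne]
  linear_combination 2 * h2

lemma f_eq (n : ℕ) (hn : 1 ≤ n) : ((f n : ℝ) : ℂ) = -(n.factorial * ∑' k : ℤ, cc k ^ (n + 1)) := by
  set κ := Complex.I * ((Real.sqrt 2 : ℝ) : ℂ) / Real.pi with hκ
  have hpi := pi_ne
  have hκ2 : κ ^ 2 * Real.pi ^ 2 = -2 := by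
    rw [hκ]; field_simp; simp [sq2]
  have hκ0 : κ ≠ 0 := by intro h; rw [h] at hκ2; norm_num at hκ2
  have h1 := iter_eq κ hκ2 n hn tau tau_im
  rw [iteratedDerivWithin_cot_pi_mul_eq_mul_tsum_div_pow hn tau_im, hκ, cot_tau, ← hκ,
    show (1 : ℂ) ^ 2 - 2 = -1 by norm_num, WW_f] at h1
  have h2 : ∀ k : ℤ, cc k ^ (n + 1) = κ ^ (n + 1) * (1 / (tau + k) ^ (n + 1)) := by
    intro k
    rw [cc_eq, div_pow]; ring
  simp_rw [h2]
  rw [tsum_mul_left]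
  have h3 : (-κ⁻¹) ^ n = (-1) ^ n * (κ ^ n)⁻¹ := by rw [neg_pow, inv_pow]
  rw [h3] at h1
  have h4 : ((-1 : ℂ) ^ n) * (-1) ^ n = 1 := by rw [← mul_pow]; simp
  have h5 : ((f n : ℝ) : ℂ) = -(κ ^ (n + 1) * (-1) ^ n * (κ⁻¹ * ((-1) ^ n * (κ ^ n)⁻¹) * -((f n : ℝ) : ℂ))) := by
    have h6 : κ ^ (n + 1) * (κ⁻¹ * (κ ^ n)⁻¹) = 1 := by
      rw [pow_succ]
      have := pow_ne_zero n hκ0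
      generalize κ ^ n = x at this
      clear_value κ
      field_simp
    clear_value κ
    linear_combination (-((f n : ℝ) : ℂ)) * (-1) ^ n * (-1) ^ n * h6 - ((f n : ℝ) : ℂ) * h4
  rw [h5, ← h1]
  linear_combination (-κ ^ (n + 1) * n.factorial * ∑' k : ℤ, (1 / (tau + k) ^ (n + 1))) * h4

end PeakAux

namespace PeakAux
open Finset Filter

/-- The angle. -/
noncomputable def tht : ℝ := Real.arctan (Real.pi / LL)

lemma cos_tht : 0 < Real.cos tht := Real.cos_arctan_pos _

lemma tan_tht : Real.sin tht * LL = Real.pi * Real.cos tht := by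
  have h1 : Real.tan tht = Real.pi / LL := by rw [tht, Real.tan_arctan]
  have := LL_pos
  have := cos_tht
  rw [Real.tan_eq_sin_div_cos] at h1
  field_simp at h1
  linarith

/-- The leading modulus. -/
noncomputable def rho : ℝ := 2 * Real.sqrt 2 * Real.cos tht / LL

lemma rho_pos : 0 < rho := by
  have := LL_pos
  have := cos_tht
  unfold rho; positivity

lemma den_eq (e : ℝ) (he : e ^ 2 = 1) : (2 * ((Real.sqrt 2 : ℝ) : ℂ) / (LL - Real.pi * e * Complex.I)) =
    rho * Complex.exp (e * tht * Complex.I) := by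
  have hL : (LL : ℂ) ≠ 0 := by exact_mod_cast LL_pos.ne'
  have h1 : Complex.sin tht * LL = Real.pi * Complex.cos tht := by exact_mod_cast tan_tht
  have h2 := Complex.sin_sq_add_cos_sq tht
  have hden : (LL : ℂ) - Real.pi * e * Complex.I ≠ 0 := by
    intro h
    have := congrArg Complex.re h
    simp at this
    exact LL_pos.ne' this
  have h3 : Complex.exp (e * tht * Complex.I) = Complex.cos tht + e * Complex.sin tht * Complex.I := by
    rw [Complex.exp_mul_I]
    have he' : e = 1 ∨ e = -1 := sq_eq_one_iff.1 he
    rcases he' with rfl | rfl <;> simp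
  rw [h3, div_eq_iff hden, rho]
  push_cast
  have he2 : (e : ℂ) ^ 2 = 1 := by exact_mod_cast he
  have key : (Complex.cos tht + e * Complex.sin tht * Complex.I) * (LL - Real.pi * e * Complex.I) * Complex.cos tht
      = LL := by
    have hI := Complex.I_sq
    linear_combination (LL - Complex.I * e * Real.pi * 0) * h2 - Complex.sin tht * h1
       + e * Complex.I * Complex.cos tht * h1 - e ^ 2 * Complex.sin tht * Real.pi * Complex.cos tht * hI
       + Complex.sin tht * Real.pi * Complex.cos tht * he2
  field_simp
  linear_combination - key

lemma cc_pair (n : ℕ) : cc 0 ^ n + cc (-1) ^ n = ((2 * rho ^ n * Real.cos (n * tht) : ℝ) : ℂ) := by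
  have h1 : cc 0 = rho * Complex.exp ((1 : ℝ) * tht * Complex.I) := by
    rw [← den_eq 1 (by norm_num), cc]; simp
  have h2 : cc (-1) = rho * Complex.exp ((-1 : ℝ) * tht * Complex.I) := by
    rw [← den_eq (-1) (by norm_num), cc]; norm_num
  rw [h1, h2, mul_pow, mul_pow, ← Complex.exp_nat_mul, ← Complex.exp_nat_mul]
  push_cast
  rw [Complex.cos]
  have e1 : (n : ℂ) * (1 * tht * Complex.I) = n * tht * Complex.I := by ring
  have e2 : (n : ℂ) * (-1 * tht * Complex.I) = -(n * tht) * Complex.I := by ring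
  rw [e1, e2]; ring

lemma norm_cc (k : ℤ) : ‖cc k‖ = 2 * Real.sqrt 2 / Real.sqrt (LL ^ 2 + (Real.pi * (2 * k + 1)) ^ 2) := by
  rw [cc, norm_div, norm_mul, Complex.norm_real, Real.norm_of_nonneg (Real.sqrt_nonneg 2)]
  congr 1
  · simp
  · rw [Complex.norm_eq_sqrt_sq_add_sq]
    simp

lemma cc_le (k : ℤ) (h0 : k ≠ 0) (h1 : k ≠ -1) : ‖cc k‖ ≤ ‖cc 1‖ := by
  rw [norm_cc, norm_cc]
  have hL := LL_pos
  have hp := Real.pi_pos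
  have : (3 : ℤ) ^ 2 ≤ (2 * k + 1) ^ 2 := by
    rcases lt_or_ge k 0 with h | h
    · have : k ≤ -2 := by omega
      nlinarith
    · have : 1 ≤ k := by omega
      nlinarith
  have h3 : (3 : ℝ) ^ 2 ≤ (2 * k + 1) ^ 2 := by exact_mod_cast this
  have h4 : (Real.pi * (2 * (1 : ℤ) + 1)) ^ 2 ≤ (Real.pi * (2 * k + 1)) ^ 2 := by
    rw [mul_pow, mul_pow]
    refine mul_le_mul_of_nonneg_left ?_ (by positivity)
    push_cast; linarith
  gcongr

lemma cc_lt : ‖cc 1‖ < rho := by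
  have h1 : rho = ‖cc 0‖ := by
    have h1 : cc 0 = rho * Complex.exp ((1 : ℝ) * tht * Complex.I) := by
      rw [← den_eq 1 (by norm_num), cc]; simp
    have h2 : Complex.exp ((1 : ℝ) * tht * Complex.I) = Complex.exp (tht * Complex.I) := by simp
    rw [h1, h2, norm_mul, Complex.norm_exp_ofReal_mul_I, Complex.norm_real,
      Real.norm_of_nonneg rho_pos.le, mul_one]
  rw [h1, norm_cc, norm_cc]
  have hL := LL_pos
  have hp := Real.pi_pos
  apply div_lt_div_of_pos_left (by positivity) (by positivity)
  apply Real.sqrt_lt_sqrt (by positivity)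
  push_cast
  nlinarith

lemma cc_pos : 0 < ‖cc 1‖ := by
  rw [norm_cc]
  have hL := LL_pos
  have hp := Real.pi_pos
  positivity

lemma cc_summable (n : ℕ) (hn : 2 ≤ n) : Summable (fun k : ℤ => ‖cc k ^ n‖) := by
  rw [summable_norm_iff]
  have h := EisensteinSeries.linear_right_summable tau 1 (k := n) (by exact_mod_cast hn)
  have h2 := h.mul_left ((Complex.I * ((Real.sqrt 2 : ℝ) : ℂ) / Real.pi) ^ n)
  refine h2.congr fun k => ?_
  rw [cc_eq, div_pow _ (tau + k)]
  simp [div_eq_mul_inv]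

theorem asymp : ∃ C : ℝ, 0 ≤ C ∧ ∀ n : ℕ, 1 ≤ n →
    |f n / n.factorial + 2 * rho ^ (n + 1) * Real.cos ((n + 1) * tht)| ≤ C * ‖cc 1‖ ^ (n + 1) := by
  let s : Finset ℤ := {0, -1}
  set C0 := ∑' k : ((s : Set ℤ)ᶜ : Set ℤ), ‖cc k ^ 2‖ with hC0
  refine ⟨C0 / ‖cc 1‖ ^ 2, div_nonneg (tsum_nonneg fun _ => norm_nonneg _) (by positivity), ?_⟩
  intro n hn
  have hsum : Summable (fun k : ℤ => cc k ^ (n + 1)) := (cc_summable (n + 1) (by omega)).of_norm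
  have h1 := f_eq n hn
  rw [← hsum.sum_add_tsum_compl (s := s), sum_pair (by norm_num), cc_pair] at h1
  have hfac : (n.factorial : ℂ) ≠ 0 := by exact_mod_cast n.factorial_ne_zero
  have h2 : ((f n / n.factorial + 2 * rho ^ (n + 1) * Real.cos ((n + 1) * tht) : ℝ) : ℂ) =
      -∑' k : ((s : Set ℤ)ᶜ : Set ℤ), cc k ^ (n + 1) := by
    rw [Complex.ofReal_add, Complex.ofReal_div, h1]
    push_cast
    field_simp
    ring
  rw [← Real.norm_eq_abs, ← Complex.norm_real, h2, norm_neg]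
  have hs2 : Summable (fun k : ((s : Set ℤ)ᶜ : Set ℤ) => ‖cc k ^ 2‖) :=
    (cc_summable 2 le_rfl).subtype _
  have h3 := (hs2.hasSum).mul_right (‖cc 1‖ ^ (n - 1))
  refine (tsum_of_norm_bounded h3 ?_).trans ?_
  · rintro ⟨k, hk⟩
    simp only [s, coe_insert, coe_singleton, Set.mem_compl_iff, Set.mem_insert_iff,
      Set.mem_singleton_iff, not_or] at hk
    have := cc_le k hk.1 hk.2
    rw [show n + 1 = 2 + (n - 1) by omega, pow_add, norm_mul]
    gcongr
    rw [norm_pow]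
    gcongr
  · have := cc_pos
    rw [show n + 1 = 2 + (n - 1) by omega, pow_add, ← hC0]
    apply le_of_eq
    field_simp

/-- The mismatch predicate. -/
def bad (n : ℕ) : Prop := Real.sign (f n) ≠ Real.sign (-Real.cos ((n + 1) * tht))

lemma bad_small (δ : ℝ) (hδ : 0 < δ) : ∃ n0 : ℕ, ∀ n ≥ n0, bad n → |Real.cos ((n + 1) * tht)| < δ := by
  obtain ⟨C, hC, h⟩ := asymp
  have hr := rho_pos
  have hq : Tendsto (fun n : ℕ => C * (‖cc 1‖ / rho) ^ (n + 1)) atTop (nhds (C * 0)) := by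
    apply Tendsto.const_mul
    have := tendsto_pow_atTop_nhds_zero_of_lt_one (r := ‖cc 1‖ / rho) (by positivity)
      ((div_lt_one hr).2 cc_lt)
    exact this.comp (tendsto_add_atTop_nat 1)
  rw [mul_zero] at hq
  obtain ⟨n1, hn1⟩ := eventually_atTop.1 (hq.eventually (gt_mem_nhds hδ))
  refine ⟨max n1 1, fun n hn hb => ?_⟩
  by_contra hlt
  push Not at hlt
  have h1 := h n (le_of_max_le_right hn)
  have h2 := hn1 n (le_of_max_le_left hn)
  set c := Real.cos ((n + 1) * tht) with hc
  have hrp : 0 < rho ^ (n + 1) := by positivity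
  have h3 : C * ‖cc 1‖ ^ (n + 1) < δ * rho ^ (n + 1) := by
    rw [div_pow, ← mul_div_assoc, div_lt_iff₀ hrp] at h2
    exact h2
  have hfac : (0 : ℝ) < n.factorial := by exact_mod_cast n.factorial_pos
  apply hb
  rw [← hc]
  have h4 := abs_le.1 (h1.trans h3.le)
  have h4' := abs_lt.1 (h1.trans_lt h3)
  rcases le_abs.1 hlt with h5 | h5
  · have h6 : δ * rho ^ (n + 1) ≤ c * rho ^ (n + 1) := by gcongr
    have h7 : f n / n.factorial < 0 := by nlinarith
    have h8 : f n < 0 := by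
      by_contra h
      push Not at h
      have : 0 ≤ f n / n.factorial := by positivity
      linarith
    rw [Real.sign_of_neg h8, Real.sign_of_neg (by linarith)]
  · have h6 : δ * rho ^ (n + 1) ≤ -c * rho ^ (n + 1) := by gcongr
    have h7 : 0 < f n / n.factorial := by nlinarith
    have h8 : 0 < f n := by
      by_contra h
      push Not at h
      have : f n / n.factorial ≤ 0 := div_nonpos_of_nonpos_of_nonneg h hfac.le
      linarith
    rw [Real.sign_of_pos h8, Real.sign_of_pos (by linarith)]

lemma bad_sep (M : ℕ) : ∃ n0 : ℕ, ∀ n ≥ n0, ∀ d, 1 ≤ d → d ≤ M → bad n → ¬ bad (n + d) := by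
  have h1 : ∃ δ > 0, ∀ d : ℕ, 1 ≤ d → d ≤ M → 2 * δ ≤ |Real.sin (d * tht)| := by
    induction M with
    | zero => exact ⟨1, one_pos, fun d h h' => by omega⟩
    | succ M ih =>
      obtain ⟨δ, hδ, h⟩ := ih
      have hs : 0 < |Real.sin ((M + 1 : ℕ) * tht)| := abs_pos.2 (irr (M + 1) (by omega))
      refine ⟨min δ (|Real.sin ((M + 1 : ℕ) * tht)| / 2), by positivity, fun d hd hd' => ?_⟩
      rcases Nat.lt_or_ge d (M + 1) with h2 | h2
      · have := h d hd (by omega)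
        have := min_le_left δ (|Real.sin ((M + 1 : ℕ) * tht)| / 2)
        linarith
      · obtain rfl : d = M + 1 := by omega
        have := min_le_right δ (|Real.sin ((M + 1 : ℕ) * tht)| / 2)
        linarith
  obtain ⟨δ, hδ, h⟩ := h1
  obtain ⟨n0, hn0⟩ := bad_small δ hδ
  refine ⟨n0, fun n hn d hd hd' hb hb' => ?_⟩
  have h2 := hn0 n hn hb
  have h3 := hn0 (n + d) (by omega) hb'
  have h4 := h d hd hd'
  have h5 : Real.sin (d * tht) = Real.sin (((n + d : ℕ) + 1) * tht) * Real.cos ((n + 1) * tht) -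
      Real.cos (((n + d : ℕ) + 1) * tht) * Real.sin ((n + 1) * tht) := by
    rw [← Real.sin_sub]; congr 1; push_cast; ring
  have h6 : |Real.sin (d * tht)| < 2 * δ := by
    rw [h5]
    refine (abs_sub _ _).trans_lt ?_
    rw [abs_mul, abs_mul]
    have a1 := Real.abs_sin_le_one (((n + d : ℕ) + 1) * tht)
    have a2 := Real.abs_sin_le_one ((n + 1) * tht)
    have a3 := abs_nonneg (Real.cos ((n + 1) * tht))
    have a4 := abs_nonneg (Real.cos (((n + d : ℕ) + 1) * tht))
    nlinarith
  linarith

open scoped Classical in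
lemma sep_count (P : ℕ → Prop) (M n0 : ℕ) (h : ∀ n ≥ n0, ∀ d, 1 ≤ d → d ≤ M → P n → ¬ P (n + d)) (N : ℕ) :
    #((range (N + 1)).filter P) ≤ n0 + (N / (M + 1) + 1) := by
  have h1 : (range (N + 1)).filter P ⊆ range n0 ∪ ((range (N + 1)).filter fun n => n0 ≤ n ∧ P n) := by
    intro k hk
    simp only [mem_filter, mem_union, mem_range] at hk ⊢
    rcases Nat.lt_or_ge k n0 with h | h
    · exact Or.inl h
    · exact Or.inr ⟨hk.1, h, hk.2⟩
  refine (card_le_card h1).trans ((card_union_le _ _).trans ?_)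
  rw [card_range]
  refine Nat.add_le_add_left ?_ _
  have h2 : #((range (N + 1)).filter fun n => n0 ≤ n ∧ P n) ≤ #(range (N / (M + 1) + 1)) := by
    apply card_le_card_of_injOn (fun k => k / (M + 1))
    · intro k hk
      simp only [coe_filter, mem_range, Set.mem_ofPred_eq, coe_range, Set.mem_Iio] at hk ⊢
      exact Nat.lt_succ_of_le (Nat.div_le_div_right (by omega))
    · intro a ha b hb hab
      simp only [coe_filter, mem_range, Set.mem_ofPred_eq] at ha hb hab
      have ea := Nat.div_add_mod a (M + 1)
      have eb := Nat.div_add_mod b (M + 1)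
      have ma := Nat.mod_lt a (Nat.succ_pos M)
      have mb := Nat.mod_lt b (Nat.succ_pos M)
      rw [hab] at ea
      simp only [Nat.succ_eq_add_one] at ma mb
      generalize (M + 1) * (b / (M + 1)) = q at ea eb
      rcases lt_trichotomy a b with hlt | hlt | hlt
      · exfalso
        refine h a ha.2.1 (b - a) (by omega) (by omega) ha.2.2 ?_
        rw [Nat.add_sub_cancel' hlt.le]; exact hb.2.2
      · exact hlt
      · exfalso
        refine h b hb.2.1 (a - b) (by omega) (by omega) hb.2.2 ?_
        rw [Nat.add_sub_cancel' hlt.le]; exact ha.2.2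
  rwa [card_range] at h2

open scoped Classical in
theorem density (P : ℕ → Prop)
    (hP : ∀ M : ℕ, ∃ n0 : ℕ, ∀ n ≥ n0, ∀ d, 1 ≤ d → d ≤ M → P n → ¬ P (n + d)) :
    Tendsto (fun N : ℕ => (#((range (N + 1)).filter P) : ℝ) / N) atTop (nhds 0) := by
  rw [Metric.tendsto_atTop]
  intro ε hε
  obtain ⟨M, hM⟩ := exists_nat_gt (2 / ε)
  obtain ⟨n0, h0⟩ := hP M
  obtain ⟨N0, hN0⟩ := exists_nat_gt (2 * (n0 + 1) / ε)
  refine ⟨N0 + 1, fun N hN => ?_⟩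
  have hNpos : (0 : ℝ) < N := by exact_mod_cast (show 0 < N by omega)
  have hNN : (N0 : ℝ) ≤ N := by exact_mod_cast (show N0 ≤ N by omega)
  rw [Real.dist_eq, sub_zero, abs_of_nonneg (by positivity), div_lt_iff₀ hNpos]
  have h1 := sep_count P M n0 h0 N
  have h2 : (#((range (N + 1)).filter P) : ℝ) ≤ n0 + ((N / (M + 1) : ℕ) + 1) := by exact_mod_cast h1
  have h3 : ((N / (M + 1) : ℕ) : ℝ) ≤ N / (M + 1) := by
    have := @Nat.cast_div_le ℝ _ _ _ N (M + 1)
    simpa using this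
  have hM1 : (0 : ℝ) < M + 1 := by positivity
  have h4 : (N : ℝ) / (M + 1) ≤ ε / 2 * N := by
    rw [div_le_iff₀ hM1]
    rw [div_lt_iff₀ hε] at hM
    nlinarith
  rw [div_lt_iff₀ hε] at hN0
  nlinarith

end PeakAux

open scoped Classical in
open Filter in
/-- The set of `n` for which `fₙ` and `-cos((n+1)θ)` do not have the same sign
has natural density zero: `(1/N)·#{n ≤ N : sign fₙ ≠ sign(-cos((n+1)θ))} → 0`
as `N → ∞`, where `θ = arctan(π / log(3+2√2))`. -/
theorem sign_mismatch_density_zero :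
    Tendsto (fun N : ℕ =>
        (((Finset.range (N + 1)).filter fun n : ℕ =>
            Real.sign (f n) ≠
              Real.sign (-Real.cos ((n + 1) *
                Real.arctan (Real.pi / Real.log (3 + 2 * Real.sqrt 2))))).card : ℝ) / N)
      atTop (nhds 0) := by
  refine (PeakAux.density PeakAux.bad PeakAux.bad_sep).congr fun N => ?_
  congr 3
  ext n
  simp only [Finset.mem_filter]
  rfl
end
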